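/- arXiv:2605.15917 — 5 statements merged into one kernel-verified Lean document; each statement's English description precedes it below -/
import Mathlib

section
/- For all integers d ≥ 0 and n ≥ d+1 and all real numbers x_1 < x_2 < ⋯ < x_n, the (n−d)×(n−d) matrix A_{d,n}(X) whose (r,i)-entry is h_r(x_i, x_{i+1}, …, x_{i+d}) for 0 ≤ r ≤ n−d−1 and 1 ≤ i ≤ n−d has determinant det A_{d,n}(X) = ∏_{1 ≤ i < j ≤ n, j−i ≥ d+1} (x_j − x_i). In particular A_{d,n}(X) is invertible whenever the nodes x_1, …, x_n are pairwise distinct. -/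
open Finset

/-- The complete homogeneous symmetric polynomial of degree `j` evaluated at
`v : Fin m → ℝ`, i.e. the sum of all monomials of total degree `j` in the
variables `v 0, …, v (m-1)` (with `hsymm 0 v = 1`).  Monotone functions
`Fin j → Fin m` correspond bijectively to the degree-`j` monomials. -/
noncomputable def hsymm {m : ℕ} (j : ℕ) (v : Fin m → ℝ) : ℝ :=
  haveI := Classical.decPred (fun f : Fin j → Fin m => Monotone f)
  ∑ f ∈ Finset.univ.filter (fun f : Fin j → Fin m => Monotone f), ∏ i, v (f i)

/-! Consecutive columns of `A_{d,n}` differ by the divided-difference identity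
`h_{r+1}(x_{i+1}, …, x_{i+d+1}) - h_{r+1}(x_i, …, x_{i+d}) =
(x_{i+d+1} - x_i) h_r(x_i, …, x_{i+d+1})`.
Since the first row is constantly `1`, subtracting each column from the next one therefore splits
the factors `x_j - x_i` with `j - i = d + 1` off the determinant and leaves `A_{d+1,n}`, which is
one row and one column smaller. Going from `d` to `d + 1` rather than starting from the Vandermonde
case `d = 0` needs no division, so the argument works over any commutative ring. -/

open MvPolynomial (eval)

section CompleteHomogeneous

variable {σ τ R : Type*} [Fintype σ] [DecidableEq σ] [Fintype τ] [DecidableEq τ]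

section CommSemiring

variable [CommSemiring R]

lemma eval_hsymm (r : ℕ) (v : σ → R) :
    eval v (MvPolynomial.hsymm σ R r) = ∑ s : Sym σ r, (s.1.map v).prod := by
  simp [MvPolynomial.hsymm, map_multiset_prod]

lemma eval_hsymm_comp_equiv (r : ℕ) (v : τ → R) (e : σ ≃ τ) :
    eval (v ∘ e) (MvPolynomial.hsymm σ R r) = eval v (MvPolynomial.hsymm τ R r) := by
  rw [← MvPolynomial.rename_hsymm _ _ r e, MvPolynomial.eval_rename]

lemma eval_hsymm_option_succ (r : ℕ) (v : Option σ → R) :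
    eval v (MvPolynomial.hsymm (Option σ) R (r + 1)) =
      v none * eval v (MvPolynomial.hsymm (Option σ) R r) +
        eval (v ∘ some) (MvPolynomial.hsymm σ R (r + 1)) := by
  simp only [eval_hsymm]
  rw [← symOptionSuccEquiv.symm.sum_comp, Fintype.sum_sum_type, mul_sum]
  congr 1
  · refine sum_congr rfl fun s _ ↦ ?_
    change (Multiset.map v (none ::ₘ s.1)).prod = _
    rw [Multiset.map_cons, Multiset.prod_cons]
  · refine sum_congr rfl fun s _ ↦ ?_
    simp [symOptionSuccEquiv]

lemma eval_hsymm_fin_succ {m : ℕ} (r : ℕ) (v : Fin (m + 1) → R) (p : Fin (m + 1)) :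
    eval v (MvPolynomial.hsymm (Fin (m + 1)) R (r + 1)) =
      v p * eval v (MvPolynomial.hsymm (Fin (m + 1)) R r) +
        eval (v ∘ p.succAbove) (MvPolynomial.hsymm (Fin m) R (r + 1)) := by
  have h := eval_hsymm_option_succ r (v ∘ (finSuccEquiv' p).symm)
  simp only [eval_hsymm_comp_equiv] at h
  simpa [Function.comp_def] using h

end CommSemiring

lemma eval_hsymm_succAbove_sub_eval_hsymm_succAbove [CommRing R] {m : ℕ} (r : ℕ)
    (v : Fin (m + 1) → R) (p q : Fin (m + 1)) :
    eval (v ∘ p.succAbove) (MvPolynomial.hsymm (Fin m) R (r + 1)) -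
        eval (v ∘ q.succAbove) (MvPolynomial.hsymm (Fin m) R (r + 1)) =
      (v q - v p) * eval v (MvPolynomial.hsymm (Fin (m + 1)) R r) := by
  linear_combination eval_hsymm_fin_succ r v q - eval_hsymm_fin_succ r v p

end CompleteHomogeneous

lemma bijOn_sym_mk_ofFn_monotone {α : Type*} [LinearOrder α] (j : ℕ) :
    Set.BijOn (fun f : Fin j → α ↦ (Sym.mk (List.ofFn f) (by simp) : Sym α j)) {f | Monotone f}
      Set.univ := by
  refine ⟨Set.mapsTo_univ _ _, fun f hf g hg hfg ↦ ?_, fun s _ ↦ ?_⟩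
  · have hperm : (List.ofFn f).Perm (List.ofFn g) :=
      Multiset.coe_eq_coe.1 (congrArg Subtype.val hfg)
    exact List.ofFn_injective (hperm.eq_of_sortedLE hf.sortedLE_ofFn hg.sortedLE_ofFn)
  · obtain ⟨s, hs⟩ := s
    obtain rfl : s.sort.length = j := by simpa using hs
    refine ⟨s.sort.get, (s.pairwise_sort (· ≤ ·)).sortedLE.monotone_get, Subtype.ext ?_⟩
    simp only [List.ofFn_get, Multiset.sort_eq]

lemma hsymm_eq_eval_hsymm {m : ℕ} (j : ℕ) (v : Fin m → ℝ) :
    hsymm j v = eval v (MvPolynomial.hsymm (Fin m) ℝ j) := by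
  have hbij := bijOn_sym_mk_ofFn_monotone (α := Fin m) j
  rw [eval_hsymm, hsymm]
  refine sum_nbij (fun f ↦ Sym.mk (List.ofFn f) (by simp)) (fun _ _ ↦ mem_univ _)
    ?_ ?_ fun f _ ↦ ?_
  · simpa using hbij.injOn
  · simpa using hbij.surjOn
  · simp [List.prod_ofFn]

section PronyMatrix

variable {R : Type*} [CommRing R] {n : ℕ}

lemma det_eq_det_sub_of_row_zero_eq_one {m : ℕ} (A : Matrix (Fin (m + 1)) (Fin (m + 1)) R)
    (hA : ∀ i, A 0 i = 1) :
    A.det = (Matrix.of fun r i : Fin m ↦ A r.succ i.succ - A r.succ i.castSucc).det := by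
  let B : Matrix (Fin (m + 1)) (Fin (m + 1)) R := Matrix.of fun r ↦
    Fin.cons (A r 0) fun i ↦ A r i.succ - A r i.castSucc
  calc
    A.det = B.det :=
      Matrix.det_eq_of_forall_col_eq_smul_add_pred (fun _ ↦ 1) (by simp [B]) (by simp [B])
    _ = (B.submatrix Fin.succ Fin.succ).det := by
      simp [Matrix.det_succ_row_zero B, Fin.sum_univ_succ, B, hA]
    _ = _ := rfl

lemma prod_add_le_eq_prod_add_eq_mul_prod_add_lt {M : Type*} [CommMonoid M]
    (f : Fin n × Fin n → M) (g : ℕ) {m : ℕ} (hm : m = n - g) :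
    ∏ p : Fin n × Fin n with p.1.1 + g ≤ p.2.1, f p =
      (∏ i : Fin m, f (⟨i, by omega⟩, ⟨i + g, by omega⟩)) *
        ∏ p : Fin n × Fin n with p.1.1 + g < p.2.1, f p := by
  rw [← prod_filter_mul_prod_filter_not _ (fun p ↦ p.1.1 + g = p.2.1), filter_filter, filter_filter]
  congr 1
  · symm
    refine prod_nbij (fun i ↦ (⟨i, by omega⟩, ⟨i + g, by omega⟩)) ?_ ?_ ?_ ?_
    · simp
    · intro i _ j _ h
      simpa [Fin.ext_iff] using h
    · rintro ⟨i, j⟩ hp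
      have hij : i.1 + g = j.1 := (mem_filter.1 hp).2.2
      exact ⟨⟨i, by omega⟩, mem_coe.2 (mem_univ _), by ext <;> simp [hij]⟩
    · simp
  · congr 1
    ext p
    simp only [mem_filter, mem_univ, true_and]
    omega

/-- The matrix with `(r, i)` entry `h_r(x_i, …, x_{i+d})`. Its size `m` is a parameter, bounded so
that all nodes exist, instead of `n - d`: this makes the recursion from `(d, m + 1)` to
`(d + 1, m)` type-correct without casts. -/
noncomputable def pronyMatrix (x : Fin n → R) (d : ℕ) {m : ℕ} (hm : m ≤ n - d) :
    Matrix (Fin m) (Fin m) R :=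
  Matrix.of fun r i ↦
    eval (fun k : Fin (d + 1) ↦ x ⟨i + k, by omega⟩) (MvPolynomial.hsymm (Fin (d + 1)) R r)

lemma pronyMatrix_succ_sub_castSucc (x : Fin n → R) (d : ℕ) {m : ℕ} (hm : m + 1 ≤ n - d)
    (r i : Fin m) :
    pronyMatrix x d hm r.succ i.succ - pronyMatrix x d hm r.succ i.castSucc =
      (x ⟨i + d + 1, by omega⟩ - x ⟨i, by omega⟩) *
        pronyMatrix x (d + 1) (m := m) (by omega) r i := by
  have h := eval_hsymm_succAbove_sub_eval_hsymm_succAbove r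
    (fun k : Fin (d + 2) ↦ x ⟨i + k, by omega⟩) 0 (Fin.last (d + 1))
  simpa [pronyMatrix, Function.comp_def, add_assoc, add_comm, add_left_comm] using h

lemma det_pronyMatrix_succ (x : Fin n → R) (d : ℕ) {m : ℕ} (hm : m + 1 ≤ n - d) :
    (pronyMatrix x d hm).det =
      (∏ i : Fin m, (x ⟨i + d + 1, by omega⟩ - x ⟨i, by omega⟩)) *
        (pronyMatrix x (d + 1) (m := m) (by omega)).det := by
  have hrow : ∀ i, pronyMatrix x d hm 0 i = 1 := by simp [pronyMatrix]
  simp only [det_eq_det_sub_of_row_zero_eq_one _ hrow, pronyMatrix_succ_sub_castSucc,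
    Matrix.det_mul_row]

lemma det_pronyMatrix (x : Fin n → R) (d : ℕ) {m : ℕ} (hm : m = n - d) :
    (pronyMatrix x d hm.le).det =
      ∏ p : Fin n × Fin n with p.1.1 + d + 1 ≤ p.2.1, (x p.2 - x p.1) := by
  induction m generalizing d with
  | zero =>
    have hempty : ∀ p : Fin n × Fin n, ¬ p.1.1 + d + 1 ≤ p.2.1 := by omega
    simp [hempty]
  | succ m ih =>
    rw [det_pronyMatrix_succ, ih (d + 1) (by omega)]
    exact (prod_add_le_eq_prod_add_eq_mul_prod_add_lt (fun p ↦ x p.2 - x p.1) (d + 1)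
      (by omega)).symm

theorem det_higher_prony_matrix_general (x : Fin n → R) (d : ℕ) :
    (pronyMatrix x d le_rfl).det =
      ∏ p : Fin n × Fin n with p.1.1 + d + 1 ≤ p.2.1, (x p.2 - x p.1) ∧
    (IsUnit (pronyMatrix x d le_rfl) ↔
      ∀ i j : Fin n, i.1 + d + 1 ≤ j.1 → IsUnit (x j - x i)) := by
  refine ⟨det_pronyMatrix x d rfl, ?_⟩
  rw [Matrix.isUnit_iff_isUnit_det, det_pronyMatrix x d rfl]
  simp [IsUnit.prod_iff]

end PronyMatrix

/-- **Determinant of the amplitude-recovery matrix of the higher Prony system.**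
For `d ≥ 0`, `n ≥ d+1` and `x_1 < ⋯ < x_n`, the `(n-d)×(n-d)` matrix with
`(r,i)` entry `h_r(x_i, x_{i+1}, …, x_{i+d})` has determinant
`∏_{i<j, j-i ≥ d+1} (x_j - x_i)`; in particular it is invertible. -/
theorem det_higher_prony_matrix (d n : ℕ) (hn : d + 1 ≤ n)
    (x : Fin n → ℝ) (hx : StrictMono x) :
    (Matrix.of fun r i : Fin (n - d) =>
        hsymm r.1 (fun k : Fin (d + 1) =>
          x ⟨i.1 + k.1, by have h1 := i.2; have h2 := k.2; omega⟩)).det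
      = ∏ p ∈ Finset.univ.filter
          (fun p : Fin n × Fin n => p.1.1 + d + 1 ≤ p.2.1), (x p.2 - x p.1)
    ∧ IsUnit (Matrix.of fun r i : Fin (n - d) =>
        hsymm r.1 (fun k : Fin (d + 1) =>
          x ⟨i.1 + k.1, by have h1 := i.2; have h2 := k.2; omega⟩)) := by
  simp only [hsymm_eq_eval_hsymm]
  obtain ⟨hdet, hunit⟩ := det_higher_prony_matrix_general x d
  exact ⟨hdet, hunit.2 fun i j hij ↦ (sub_pos.2 (hx (by omega))).ne'.isUnit⟩
end

section
/- The normalized moment sequence (c_j) satisfies, for every j ≥ n−d, the linear recurrence c_{d+j} − e_1(x_1,…,x_n) c_{d+j−1} + e_2(x_1,…,x_n) c_{d+j−2} − ⋯ + (−1)^n e_n(x_1,…,x_n) c_{d+j−n} = 0, i.e. Σ_{k=0}^{n} (−1)^k e_k(x_1,…,x_n) c_{d+j−k} = 0. -/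
open Finset

/-- The normalized moment sequence: `c_j = 0` for `j < d` and
`c_{d+j} = Σ_{i=1}^{n-d} α_i h_j(x_i, …, x_{i+d})`. -/
noncomputable def cseq (d n : ℕ) (x : Fin n → ℝ) (α : Fin (n - d) → ℝ) (j : ℕ) : ℝ :=
  if d ≤ j then
    ∑ i : Fin (n - d), α i * hsymm (j - d)
      (fun k : Fin (d + 1) => x ⟨i.1 + k.1, by have h1 := i.2; have h2 := k.2; omega⟩)
  else 0

/-- The elementary symmetric polynomial `e_k(x_1,…,x_n)` (with `e_0 = 1`). -/
noncomputable def esymmVal (n : ℕ) (x : Fin n → ℝ) (k : ℕ) : ℝ :=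
  ∑ t ∈ Finset.powersetCard k (Finset.univ : Finset (Fin n)), ∏ r ∈ t, x r

/-
Put `P_S(X) = ∏_{s ∈ S} (1 - x_s X)`, so that `P(X) = P_{[n]}(X) = ∑ (-1)^k e_k X^k`. The
generating function of the `h_j` of a window `W` of nodes is `1 / P_W`, hence that of the moments
is `∑ j, c_j X^j = X^d ∑ i, α_i / P_{W_i}`. Multiplying by `P` cancels every denominator and leaves
the polynomial `X^d ∑ i, α_i P_{[n] \ W_i}` of degree at most `d + (n - (d + 1)) < n`. So the
coefficient of `X^N` in `P(X) ∑ j, c_j X^j` vanishes for all `N ≥ n`, which is the recurrence.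
-/

section CompleteHomogeneous

variable {j m : ℕ}

theorem monotone_cons_zero_iff {g : Fin j → Fin (m + 1)} :
    Monotone (Fin.cons 0 g : Fin (j + 1) → Fin (m + 1)) ↔ Monotone g := by
  refine ⟨fun h => h.comp Fin.strictMono_succ.monotone, fun hg a b hab => ?_⟩
  cases a using Fin.cases with
  | zero => exact Fin.zero_le _
  | succ a =>
    cases b using Fin.cases with
    | zero => exact absurd hab (Fin.succ_pos a).not_ge
    | succ b => exact hg (Fin.succ_le_succ_iff.mp hab)

theorem sum_monotone_head_eq_zero {M : Type*} [AddCommMonoid M]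
    (F : (Fin (j + 1) → Fin (m + 1)) → M) :
    ∑ f with Monotone f ∧ f 0 = 0, F f =
      ∑ g : Fin j → Fin (m + 1) with Monotone g, F (Fin.cons 0 g) := by
  symm
  refine Finset.sum_nbij' (fun g => Fin.cons 0 g) Fin.tail ?_ ?_ ?_ ?_ fun _ _ => rfl
  · intro g hg
    simpa [monotone_cons_zero_iff] using hg
  · intro f hf
    simp only [mem_filter_univ] at hf ⊢
    exact hf.1.comp Fin.strictMono_succ.monotone
  · exact fun g _ => Fin.tail_cons (α := fun _ => Fin (m + 1)) 0 g
  · intro f hf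
    simp only [mem_filter_univ] at hf
    rw [← hf.2, Fin.cons_self_tail]

theorem sum_monotone_head_ne_zero {M : Type*} [AddCommMonoid M]
    (F : (Fin (j + 1) → Fin (m + 1)) → M) :
    ∑ f with Monotone f ∧ f 0 ≠ 0, F f =
      ∑ g : Fin (j + 1) → Fin m with Monotone g, F (Fin.succ ∘ g) := by
  symm
  refine Finset.sum_nbij (Fin.succ ∘ ·) ?_ (Fin.succ_injective m).comp_left.injOn ?_ fun _ _ => rfl
  · intro g hg
    simp only [mem_filter_univ] at hg ⊢
    exact ⟨Fin.strictMono_succ.monotone.comp hg, Fin.succ_ne_zero _⟩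
  · intro f hf
    simp only [coe_filter_univ, Set.mem_ofPred_eq] at hf
    obtain ⟨hmono, hhead⟩ := hf
    have f_ne_zero (i : Fin (j + 1)) : f i ≠ 0 :=
      Fin.pos_iff_ne_zero.mp ((Fin.pos_iff_ne_zero.mpr hhead).trans_le (hmono (Fin.zero_le i)))
    refine ⟨fun i => (f i).pred (f_ne_zero i), ?_, funext fun i => Fin.succ_pred _ _⟩
    simpa using Fin.monotone_pred_comp f_ne_zero hmono

theorem hsymm_eq_sum_monotone (j : ℕ) (v : Fin m → ℝ) :
    hsymm j v = ∑ f : Fin j → Fin m with Monotone f, ∏ i, v (f i) := by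
  unfold hsymm
  congr!

theorem hsymm_zero (v : Fin m → ℝ) : hsymm 0 v = 1 := by
  simp [hsymm_eq_sum_monotone, Subsingleton.monotone]

theorem hsymm_succ_fin_zero (j : ℕ) (v : Fin 0 → ℝ) : hsymm (j + 1) v = 0 := by
  simp [hsymm_eq_sum_monotone]

theorem hsymm_succ (j : ℕ) (v : Fin (m + 1) → ℝ) :
    hsymm (j + 1) v = v 0 * hsymm j v + hsymm (j + 1) (Fin.tail v) := by
  simp only [hsymm_eq_sum_monotone]
  rw [← sum_filter_add_sum_filter_not _ (fun f : Fin (j + 1) → Fin (m + 1) => f 0 = 0),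
    filter_filter, filter_filter, sum_monotone_head_eq_zero, sum_monotone_head_ne_zero, mul_sum]
  simp [Fin.prod_univ_succ, Fin.tail]

end CompleteHomogeneous

section ReversedNodal

open Polynomial

variable {ι R : Type*} [CommRing R]

/-- The reversed nodal polynomial `∏ i ∈ s, (1 - x i * X)`: the polynomial `Lagrange.nodal s x` with
its coefficients in the opposite order. Its coefficients are the signed elementary symmetric
functions of the nodes and it is the denominator of the generating function of the complete
homogeneous ones. -/
noncomputable def revNodal (s : Finset ι) (x : ι → R) : R[X] :=
  ∏ i ∈ s, (1 - C (x i) * X)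

theorem coeff_revNodal (s : Finset ι) (x : ι → R) (k : ℕ) :
    (revNodal s x).coeff k = (-1) ^ k * ∑ t ∈ powersetCard k s, ∏ i ∈ t, x i := by
  classical
  have expansion : revNodal s x =
      ∑ t ∈ s.powerset, C ((-1) ^ #t * ∏ i ∈ t, x i) * X ^ #t := by
    simp only [revNodal, sub_eq_add_neg, prod_one_add, prod_neg, prod_mul_distrib, prod_const]
    simp [mul_assoc]
  simp only [expansion, finsetSum_coeff, coeff_C_mul_X_pow, powersetCard_eq_filter, mul_sum,
    sum_filter]
  refine sum_congr rfl fun t _ => ?_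
  grind

theorem natDegree_revNodal_le (s : Finset ι) (x : ι → R) : (revNodal s x).natDegree ≤ #s := by
  have factor_le (i : ι) : (1 - C (x i) * X).natDegree ≤ 1 := by compute_degree
  simpa [revNodal] using
    (natDegree_prod_le s _).trans (sum_le_card_nsmul s _ 1 fun i _ => factor_le i)

theorem revNodal_univ_eq_mul_compl [Fintype ι] [DecidableEq ι] {κ : Type*} [Fintype κ]
    (x : ι → R) (w : κ ↪ ι) :
    revNodal univ x = revNodal (univ.map w)ᶜ x * revNodal univ (x ∘ w) := by
  simp only [revNodal, ← prod_compl_mul_prod (univ.map w), prod_map, Function.comp_apply]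

theorem revNodal_univ_succ {m : ℕ} (v : Fin (m + 1) → R) :
    revNodal univ v = (1 - C (v 0) * X) * revNodal univ (Fin.tail v) :=
  Fin.prod_univ_succ _

theorem coeff_coe_mul_mk_of_natDegree_le {p : R[X]} {n N : ℕ} (hp : p.natDegree ≤ n) (hN : n ≤ N)
    (c : ℕ → R) :
    PowerSeries.coeff N ((p : PowerSeries R) * PowerSeries.mk c) =
      ∑ k ∈ range (n + 1), p.coeff k * c (N - k) := by
  simp only [PowerSeries.coeff_mul, coeff_coe, PowerSeries.coeff_mk,
    Nat.sum_antidiagonal_eq_sum_range_succ fun k l => p.coeff k * c l]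
  symm
  refine sum_subset (range_mono (by lia)) fun k _ hk => ?_
  rw [coeff_eq_zero_of_natDegree_lt (by grind), zero_mul]

end ReversedNodal

section GeneratingFunction

open PowerSeries hiding mk

theorem one_sub_mul_mk_hsymm {m : ℕ} (v : Fin (m + 1) → ℝ) :
    (1 - C (v 0) * X) * PowerSeries.mk (hsymm · v) = PowerSeries.mk (hsymm · (Fin.tail v)) := by
  ext j
  cases j with
  | zero => simp [sub_mul, mul_assoc, hsymm_zero]
  | succ j => simp [sub_mul, mul_assoc, coeff_succ_X_mul, hsymm_succ]

theorem revNodal_mul_mk_hsymm {m : ℕ} (v : Fin m → ℝ) :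
    (revNodal univ v : ℝ⟦X⟧) * PowerSeries.mk (hsymm · v) = 1 := by
  induction m with
  | zero =>
    ext j
    cases j <;> simp [revNodal, hsymm_zero, hsymm_succ_fin_zero, coeff_one]
  | succ m ih =>
    calc (revNodal univ v : ℝ⟦X⟧) * PowerSeries.mk (hsymm · v)
        = (revNodal univ (Fin.tail v) : ℝ⟦X⟧) *
            ((1 - C (v 0) * X) * PowerSeries.mk (hsymm · v)) := by
          rw [revNodal_univ_succ]
          push_cast
          ring
      _ = 1 := by rw [one_sub_mul_mk_hsymm, ih]

theorem revNodal_mul_mk_hsymm_comp {ι : Type*} [Fintype ι] [DecidableEq ι] {m : ℕ}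
    (x : ι → ℝ) (w : Fin m ↪ ι) :
    (revNodal univ x : ℝ⟦X⟧) * PowerSeries.mk (hsymm · (x ∘ w)) = revNodal (univ.map w)ᶜ x := by
  rw [revNodal_univ_eq_mul_compl x w, Polynomial.coe_mul, mul_assoc, revNodal_mul_mk_hsymm, mul_one]

end GeneratingFunction

section Moments

open PowerSeries hiding mk

variable {d n : ℕ}

/-- The embedding of the `i`-th window of `d + 1` consecutive indices `i, i + 1, …, i + d` into
`Fin n`. -/
def window (i : Fin (n - d)) : Fin (d + 1) ↪ Fin n where
  toFun k := ⟨i + k, by lia⟩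
  inj' a b hab := by simpa [Fin.ext_iff] using hab

/-- The numerator of the generating function `∑ j, c_j X^j` of the normalized moments over the
denominator `revNodal univ x`. -/
noncomputable def momentNumerator (x : Fin n → ℝ) (α : Fin (n - d) → ℝ) : Polynomial ℝ :=
  Polynomial.X ^ d * ∑ i, Polynomial.C (α i) * revNodal (univ.map (window i))ᶜ x

theorem coe_momentNumerator (x : Fin n → ℝ) (α : Fin (n - d) → ℝ) :
    (momentNumerator x α : ℝ⟦X⟧) =
      X ^ d * ∑ i, C (α i) * (revNodal (univ.map (window i))ᶜ x : ℝ⟦X⟧) := by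
  simp only [momentNumerator, ← Polynomial.coeToPowerSeries.ringHom_apply, map_mul, map_sum,
    map_pow]
  simp

theorem mk_cseq (x : Fin n → ℝ) (α : Fin (n - d) → ℝ) :
    PowerSeries.mk (cseq d n x α) =
      X ^ d * ∑ i, C (α i) * PowerSeries.mk (hsymm · (x ∘ window i)) := by
  ext j
  simp only [coeff_mk, coeff_X_pow_mul', map_sum, coeff_C_mul]
  rfl

theorem revNodal_mul_mk_cseq (x : Fin n → ℝ) (α : Fin (n - d) → ℝ) :
    (revNodal univ x : ℝ⟦X⟧) * PowerSeries.mk (cseq d n x α) = momentNumerator x α := by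
  calc (revNodal univ x : ℝ⟦X⟧) * PowerSeries.mk (cseq d n x α)
      = X ^ d * ∑ i, C (α i) * (revNodal univ x * PowerSeries.mk (hsymm · (x ∘ window i))) := by
        rw [mk_cseq, mul_left_comm, mul_sum]
        simp only [mul_left_comm (C _)]
    _ = momentNumerator x α := by
        simp only [revNodal_mul_mk_hsymm_comp, coe_momentNumerator]

theorem natDegree_momentNumerator_lt (hn : d + 1 ≤ n) (x : Fin n → ℝ) (α : Fin (n - d) → ℝ) :
    (momentNumerator x α).natDegree < n := by
  have summand_le (i : Fin (n - d)) :
      (Polynomial.C (α i) * revNodal (univ.map (window i))ᶜ x).natDegree ≤ n - (d + 1) := by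
    refine (Polynomial.natDegree_C_mul_le _ _).trans ((natDegree_revNodal_le _ x).trans_eq ?_)
    simp [card_compl]
  have numerator_le : (momentNumerator x α).natDegree ≤ d + (n - (d + 1)) :=
    Polynomial.natDegree_mul_le_of_le (Polynomial.natDegree_X_pow_le d)
      (Polynomial.natDegree_sum_le_of_forall_le _ _ fun i _ => summand_le i)
  lia

theorem cseq_recurrence_general (hn : d + 1 ≤ n) (x : Fin n → ℝ) (α : Fin (n - d) → ℝ)
    {N : ℕ} (hN : n ≤ N) :
    ∑ k ∈ range (n + 1), (-1) ^ k * esymmVal n x k * cseq d n x α (N - k) = 0 := by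
  have natDegree_le : (revNodal univ x).natDegree ≤ n := by
    simpa using natDegree_revNodal_le univ x
  calc ∑ k ∈ range (n + 1), (-1) ^ k * esymmVal n x k * cseq d n x α (N - k)
      = ∑ k ∈ range (n + 1), (revNodal univ x).coeff k * cseq d n x α (N - k) := by
        simp only [coeff_revNodal, esymmVal]
    _ = coeff N ((revNodal univ x : ℝ⟦X⟧) * PowerSeries.mk (cseq d n x α)) :=
        (coeff_coe_mul_mk_of_natDegree_le natDegree_le hN _).symm
    _ = (momentNumerator x α).coeff N := by rw [revNodal_mul_mk_cseq, Polynomial.coeff_coe]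
    _ = 0 := Polynomial.coeff_eq_zero_of_natDegree_lt
        ((natDegree_momentNumerator_lt hn x α).trans_le hN)

end Moments

/-- **Linear recurrence for the normalized moments.** For every `j ≥ n - d`,
`Σ_{k=0}^{n} (-1)^k e_k(x_1,…,x_n) c_{d+j-k} = 0`. -/
theorem cseq_recurrence (d n : ℕ) (hn : d + 1 ≤ n) (x : Fin n → ℝ)
    (hx : StrictMono x) (α : Fin (n - d) → ℝ) :
    ∀ j : ℕ, n - d ≤ j →
      ∑ k ∈ Finset.range (n + 1),
        (-1 : ℝ) ^ k * esymmVal n x k * cseq d n x α (d + j - k) = 0 :=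
  fun _ hj => cseq_recurrence_general hn x α (by lia)
end

section
/- Let V ⊂ ℝ^d be a finite set whose convex hull P = conv(V) has nonempty interior, and let ν be the pushforward of the Lebesgue measure restricted to P under the projection π(z_1,…,z_d) = z_1. Then ν is absolutely continuous with respect to Lebesgue measure on ℝ, with a nonnegative density ρ supported on the interval [min π(V), max π(V)], and ρ is piecewise polynomial of degree at most d−1 with breakpoints among π(V): for any two consecutive values a < b of π(V) (i.e. no element of π(V) lies strictly between a and b), there is a real polynomial q of degree at most d−1 such that ρ = q almost everywhere on (a, b). -/
open MeasureTheory Set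

/-!
Cut a simplex at the point of height `t` on an edge whose end points lie below and above `t`. The
volumes of the two pieces are linear in `t`, and each piece has one more vertex at height `t`;
iterating, the volume of the part of the simplex below height `t` is polynomial in `t` as long as
`t` does not cross the height of a vertex. This is the recursion for B-splines. A polytope is
reduced to simplices by a regular triangulation: lift the vertices to generic heights and project
the lower faces of the convex hull of the lifted points. The density is the derivative of the
volume below height `t`.
-/

open Module
open Function (update)

section Convex
variable {ι E : Type*} [AddCommGroup E] [Module ℝ E]

lemma mem_convexHull_range_iff_exists_stdSimplex [Fintype ι] (p : ι → E) (x : E) :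
    x ∈ convexHull ℝ (range p) ↔ ∃ w ∈ stdSimplex ℝ ι, ∑ i, w i • p i = x := by
  classical
  have hrange : range p = Fintype.linearCombination ℝ p '' range fun i ↦ Pi.single i 1 := by
    rw [← range_comp]
    exact congr_arg range (funext fun i ↦ by simp [Fintype.linearCombination_apply])
  rw [hrange, ← LinearMap.image_convexHull, convexHull_rangle_single_eq_stdSimplex]
  rfl

lemma exists_prodMk_mem_convexHull_range {F : Type*} [AddCommGroup F] [Module ℝ F] (p : ι → E)
    (h : ι → F) {x : E} (hx : x ∈ convexHull ℝ (range p)) :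
    ∃ t, (x, t) ∈ convexHull ℝ (range fun i ↦ (p i, h i)) := by
  have hfst : Prod.fst '' convexHull ℝ (range fun i ↦ (p i, h i)) = convexHull ℝ (range p) := by
    rw [← LinearMap.coe_fst (R := ℝ), LinearMap.image_convexHull, ← range_comp]
    rfl
  obtain ⟨⟨y, t⟩, hyt, rfl⟩ := hfst.ge hx
  exact ⟨t, hyt⟩

lemma mem_convexHull_image_zeros_of_nonneg [Finite ι] {p : ι → E}
    {g : E →ᵃ[ℝ] ℝ} (hg : ∀ i, 0 ≤ g (p i)) {x : E} (hx : x ∈ convexHull ℝ (range p))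
    (hgx : g x = 0) : x ∈ convexHull ℝ (p '' {i | g (p i) = 0}) := by
  have := Fintype.ofFinite ι
  obtain ⟨w, ⟨hw_nonneg, hw_sum⟩, rfl⟩ := (mem_convexHull_range_iff_exists_stdSimplex p x).1 hx
  have hsum : ∑ i, w i * g (p i) = 0 := by
    rw [← hgx, ← Finset.affineCombination_eq_linear_combination _ _ _ hw_sum,
      Finset.map_affineCombination _ _ _ hw_sum,
      Finset.affineCombination_eq_linear_combination _ _ _ hw_sum]
    rfl
  have hzero (i : ι) : w i * g (p i) = 0 :=
    (Finset.sum_eq_zero_iff_of_nonneg fun i _ ↦ mul_nonneg (hw_nonneg i) (hg i)).1 hsum i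
      (Finset.mem_univ i)
  rw [← finsum_eq_sum_of_fintype] at hw_sum ⊢
  exact (convex_convexHull ℝ _).finsum_mem hw_nonneg hw_sum fun i hi ↦
    subset_convexHull ℝ _ ⟨i, (mul_eq_zero.1 (hzero i)).resolve_left hi, rfl⟩

variable [DecidableEq ι]

lemma convexHull_range_update_subset {q : ι → E} {w : E} (hw : w ∈ convexHull ℝ (range q)) (i : ι) :
    convexHull ℝ (range (update q i w)) ⊆ convexHull ℝ (range q) := by
  refine convexHull_min (range_subset_iff.2 fun k ↦ ?_) (convex_convexHull ℝ _)
  obtain rfl | hk := eq_or_ne k i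
  · rwa [Function.update_self]
  · rw [Function.update_of_ne hk]
    exact subset_convexHull ℝ _ (mem_range_self k)

/-- The ratio test of the simplex method picks the vertex that `w` replaces. -/
lemma convexHull_range_subset_iUnion_update [Finite ι] {q : ι → E} {w : E}
    (hw : w ∈ convexHull ℝ (range q)) :
    convexHull ℝ (range q) ⊆ ⋃ i, convexHull ℝ (range (update q i w)) := by
  intro x hx
  have := Fintype.ofFinite ι
  obtain ⟨ω, ⟨hω_nonneg, hω_sum⟩, hw_eq⟩ := (mem_convexHull_range_iff_exists_stdSimplex q w).1 hw
  obtain ⟨c, ⟨hc_nonneg, hc_sum⟩, rfl⟩ := (mem_convexHull_range_iff_exists_stdSimplex q x).1 hx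
  have hpos : {k | 0 < ω k}.toFinset.Nonempty := by
    obtain ⟨k, -, hk⟩ := Finset.exists_ne_zero_of_sum_ne_zero (hω_sum.trans_ne one_ne_zero)
    exact ⟨k, by simpa using (hω_nonneg k).lt_of_ne' hk⟩
  obtain ⟨i, hi, hmin⟩ := Finset.exists_min_image _ (fun k ↦ c k / ω k) hpos
  simp only [mem_toFinset, mem_ofPred_eq] at hi hmin
  set r := c i / ω i
  let d : ι → ℝ := c - r • ω
  have hd_nonneg (k : ι) : 0 ≤ d k := by
    obtain hk | hk := (hω_nonneg k).eq_or_lt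
    · simpa [d, ← hk] using hc_nonneg k
    · simpa [d] using (le_div_iff₀ hk).1 (hmin k hk)
  have hdi : d i = 0 := by simp [d, r, div_mul_cancel₀ _ hi.ne']
  refine mem_iUnion.2 ⟨i, (mem_convexHull_range_iff_exists_stdSimplex _ _).2
    ⟨d + Pi.single i r, ⟨fun k ↦ add_nonneg (hd_nonneg k) ?_, ?_⟩, ?_⟩⟩
  · exact (Pi.single_nonneg (α := fun _ ↦ ℝ)).2 (div_nonneg (hc_nonneg i) hi.le) k
  · simp [d, Finset.sum_add_distrib, ← Finset.mul_sum, hω_sum, hc_sum]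
  · have hterm (k : ι) : (d + Pi.single i r : ι → ℝ) k • update q i w k =
        d k • q k + (Pi.single i r : ι → ℝ) k • w := by
      obtain rfl | hk := eq_or_ne k i <;> simp [*]
    rw [Finset.sum_congr rfl fun k _ ↦ hterm k]
    simp [d, Finset.sum_add_distrib, ← Finset.sum_smul, sub_smul, mul_smul, ← Finset.smul_sum,
      hw_eq]

variable [Fintype ι]

lemma single_add_single_mem_stdSimplex (i j : ι) {s : ℝ} (hs : s ∈ Icc (0 : ℝ) 1) :
    Pi.single i (1 - s) + Pi.single j s ∈ stdSimplex ℝ ι := by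
  have hi : 0 ≤ (Pi.single i (1 - s) : ι → ℝ) := Pi.single_nonneg.2 (sub_nonneg.2 hs.2)
  have hj : 0 ≤ (Pi.single j s : ι → ℝ) := Pi.single_nonneg.2 hs.1
  exact ⟨add_nonneg hi hj, by simp [Finset.sum_add_distrib]⟩

lemma sum_single_add_single_smul (q : ι → E) (i j : ι) (s : ℝ) :
    ∑ k, (Pi.single i (1 - s) + Pi.single j s : ι → ℝ) k • q k =
      AffineMap.lineMap (q i) (q j) s := by
  simp [add_smul, Finset.sum_add_distrib, Pi.single_apply, ite_smul,
    AffineMap.lineMap_apply_module]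

end Convex

/-! ### Subdividing a simplex -/

lemma affineSpan_range_ne_top_of_not_affineIndependent {𝕜 ι E : Type*} [DivisionRing 𝕜]
    [AddCommGroup E] [Module 𝕜 E] [Fintype ι] {q : ι → E}
    (hι : Fintype.card ι = finrank 𝕜 E + 1) (hq : ¬ AffineIndependent 𝕜 q) :
    affineSpan 𝕜 (range q) ≠ ⊤ := by
  intro htop
  rw [affineIndependent_iff_finrank_vectorSpan_eq 𝕜 q hι, ← direction_affineSpan, htop,
    AffineSubspace.direction_top, finrank_top] at hq
  exact hq rfl

section Measure
variable {ι E : Type*} [NormedAddCommGroup E] [NormedSpace ℝ E] [MeasurableSpace E] (μ : Measure E)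

lemma isFiniteMeasure_restrict_convexHull [IsFiniteMeasureOnCompacts μ] {s : Set E}
    (hs : s.Finite) : IsFiniteMeasure (μ.restrict (convexHull ℝ s)) :=
  isFiniteMeasure_restrict.2 (hs.isCompact_convexHull ℝ).measure_ne_top

variable [FiniteDimensional ℝ E] [BorelSpace E] [μ.IsAddHaarMeasure]

lemma addHaar_setOf_affineMap_eq {f g : E →ᵃ[ℝ] ℝ} (hfg : f ≠ g) : μ {x | f x = g x} = 0 := by
  have hset : {x | f x = g x} = ((AffineSubspace.mk' (0 : ℝ) ⊥).comap (f - g) : Set E) := by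
    ext x
    simp [AffineSubspace.mem_mk', sub_eq_zero]
  rw [hset]
  refine Measure.addHaar_affineSubspace μ _ fun htop ↦ hfg ?_
  ext x
  have hx : x ∈ (AffineSubspace.mk' (0 : ℝ) ⊥).comap (f - g) := htop ▸ AffineSubspace.mem_top ..
  simpa [AffineSubspace.mem_mk', sub_eq_zero] using hx

lemma addHaar_convexHull_eq_zero {s : Set E} (hs : affineSpan ℝ s ≠ ⊤) : μ (convexHull ℝ s) = 0 :=
  measure_mono_null (convexHull_subset_affineSpan s) (Measure.addHaar_affineSubspace μ _ hs)

lemma addHaar_image_affineMap (f : E →ᵃ[ℝ] E) (s : Set E) :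
    μ (f '' s) = ENNReal.ofReal |LinearMap.det f.linear| * μ s := by
  have hf : f '' s = (fun y ↦ y + f 0) '' (f.linear '' s) := by
    rw [image_image]
    exact congr_arg (· '' s) f.decomp
  rw [hf, image_add_right, measure_preimage_add_right, Measure.addHaar_image_linearMap]

variable [DecidableEq ι]

/-- Cramer's rule: `x ↦ x + b.coord i x • (w - b i)` moves `b i` to `w`, fixes the other vertices
and has determinant `b.coord i w`. -/
lemma addHaar_convexHull_update_affineBasis (b : AffineBasis ι ℝ E) (i : ι) (w : E) :
    μ (convexHull ℝ (range (update b i w))) =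
      ENNReal.ofReal |b.coord i w| * μ (convexHull ℝ (range b)) := by
  let f : E →ᵃ[ℝ] E :=
    { toFun := fun x ↦ x + b.coord i x • (w - b i)
      linear := LinearMap.transvection (b.coord i).linear (w - b i)
      map_vadd' := fun x v ↦ by
        rw [AffineMap.map_vadd, LinearMap.transvection.apply]
        simp only [vadd_eq_add]
        module }
  have hf : update b i w = f ∘ b := by
    ext k
    obtain rfl | hk := eq_or_ne k i <;> simp [f, b.coord_apply, *, Ne.symm]
  have hdet : LinearMap.det f.linear = b.coord i w := by
    rw [LinearMap.transvection.det, ← vsub_eq_sub w, AffineMap.linearMap_vsub, b.coord_apply_eq]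
    simp
  rw [hf, range_comp, ← AffineMap.image_convexHull, addHaar_image_affineMap, hdet]

variable [Fintype ι]

lemma addHaar_convexHull_update_sum (hι : Fintype.card ι = finrank ℝ E + 1) (q : ι → E) {ω : ι → ℝ}
    (hω : ω ∈ stdSimplex ℝ ι) (i : ι) :
    μ (convexHull ℝ (range (update q i (∑ k, ω k • q k)))) =
      ENNReal.ofReal (ω i) * μ (convexHull ℝ (range q)) := by
  by_cases hq : AffineIndependent ℝ q
  · let b : AffineBasis ι ℝ E :=
      ⟨q, hq, hq.affineSpan_eq_top_iff_card_eq_finrank_add_one.2 hι⟩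
    have hcoord : b.coord i (∑ k, ω k • q k) = ω i := by
      rw [← Finset.affineCombination_eq_linear_combination _ _ _ hω.2]
      exact b.coord_apply_combination_of_mem (Finset.mem_univ i) hω.2
    rw [← abs_of_nonneg (hω.1 i), ← hcoord]
    exact addHaar_convexHull_update_affineBasis μ b i _
  · have hnull : μ (convexHull ℝ (range q)) = 0 :=
      addHaar_convexHull_eq_zero μ (affineSpan_range_ne_top_of_not_affineIndependent hι hq)
    have hw := (mem_convexHull_range_iff_exists_stdSimplex q _).2 ⟨ω, hω, rfl⟩
    rw [hnull, mul_zero, measure_mono_null (convexHull_range_update_subset hw i) hnull]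

lemma restrict_convexHull_eq_sum_update (hι : Fintype.card ι = finrank ℝ E + 1) (q : ι → E)
    {ω : ι → ℝ} (hω : ω ∈ stdSimplex ℝ ι) :
    μ.restrict (convexHull ℝ (range q)) =
      ∑ i, μ.restrict (convexHull ℝ (range (update q i (∑ k, ω k • q k)))) := by
  have hw := (mem_convexHull_range_iff_exists_stdSimplex q _).2 ⟨ω, hω, rfl⟩
  have := isFiniteMeasure_restrict_convexHull μ (finite_range q)
  refine Measure.eq_of_le_of_measure_univ_eq ?_ ?_
  · rw [← Measure.sum_fintype]
    exact (Measure.restrict_mono_set μ (convexHull_range_subset_iUnion_update hw)).trans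
      Measure.restrict_iUnion_le
  · simp only [Measure.finsetSum_apply, Measure.restrict_apply_univ,
      addHaar_convexHull_update_sum μ hι q hω]
    rw [← Finset.sum_mul, ← ENNReal.ofReal_sum_of_nonneg fun i _ ↦ hω.1 i, hω.2,
      ENNReal.ofReal_one, one_mul]

lemma measureReal_convexHull_update_lineMap (hι : Fintype.card ι = finrank ℝ E + 1) (q : ι → E)
    {i j : ι} (hij : i ≠ j) {s : ℝ} (hs : s ∈ Icc (0 : ℝ) 1) :
    μ.real (convexHull ℝ (range (update q i (AffineMap.lineMap (q i) (q j) s)))) =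
      (1 - s) * μ.real (convexHull ℝ (range q)) := by
  rw [← sum_single_add_single_smul, measureReal_def,
    addHaar_convexHull_update_sum μ hι q (single_add_single_mem_stdSimplex i j hs)]
  simp [hij, measureReal_def, hs.2]

lemma restrict_convexHull_eq_add_update_lineMap (hι : Fintype.card ι = finrank ℝ E + 1)
    (q : ι → E) {i j : ι} (hij : i ≠ j) {s : ℝ} (hs : s ∈ Icc (0 : ℝ) 1) :
    μ.restrict (convexHull ℝ (range q)) =
      μ.restrict (convexHull ℝ (range (update q i (AffineMap.lineMap (q i) (q j) s)))) +
      μ.restrict (convexHull ℝ (range (update q j (AffineMap.lineMap (q i) (q j) s)))) := by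
  have hω := single_add_single_mem_stdSimplex i j hs
  rw [restrict_convexHull_eq_sum_update μ hι q hω, ← sum_single_add_single_smul]
  refine Fintype.sum_eq_add i j hij fun k hk ↦ Measure.restrict_eq_zero.2 ?_
  rw [addHaar_convexHull_update_sum μ hι q hω]
  simp [hk.1, hk.2]

end Measure

/-! ### Sublevel volumes of simplices -/

section Sublevel
open Polynomial
variable {ι E : Type*} [AddCommGroup E] [Module ℝ E] [MeasurableSpace E] (μ : Measure E)
  {φ : E →ₗ[ℝ] ℝ} {h : ι → ℝ} {A : Finset ι} {I : Set ℝ}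

lemma restrict_convexHull_sublevel_eq {s : Set E} {t : ℝ} (hs : ∀ x ∈ s, φ x ≤ t) :
    μ.restrict (convexHull ℝ s) {x | φ x ≤ t} = μ (convexHull ℝ s) := by
  have hhull : convexHull ℝ s ⊆ {x | φ x ≤ t} :=
    convexHull_min hs (convex_halfSpace_le φ.isLinear t)
  rw [Measure.restrict_apply_superset hhull]

/-- The polynomial `Q` gives, for `t ∈ I`, the fraction of the volume of a simplex with vertices
`q i` lying in the half-space `φ ≤ t`, whenever the vertices in `A` have the prescribed heights
`φ (q i) = h i` and all the others have height `t`. Vertices outside `A` are those which a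
subdivision at height `t` has moved to that level. -/
def IsSublevelFraction (φ : E →ₗ[ℝ] ℝ) (h : ι → ℝ) (A : Finset ι) (I : Set ℝ) (Q : ℝ[X]) : Prop :=
  ∀ t ∈ I, ∀ q : ι → E, (∀ i ∈ A, φ (q i) = h i) → (∀ i ∉ A, φ (q i) = t) →
    (μ.restrict (convexHull ℝ (range q))).real {x | φ x ≤ t} =
      Q.eval t * μ.real (convexHull ℝ (range q))

lemma isSublevelFraction_one (hA : ∀ i ∈ A, ∀ t ∈ I, h i ≤ t) :
    IsSublevelFraction μ φ h A I 1 := by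
  intro t ht q hqA hqt
  have hle : ∀ x ∈ range q, φ x ≤ t := by
    rintro _ ⟨i, rfl⟩
    by_cases hi : i ∈ A
    · exact (hqA i hi).trans_le (hA i hi t ht)
    · exact (hqt i hi).le
  rw [measureReal_def, restrict_convexHull_sublevel_eq μ hle, measureReal_def, eval_one, one_mul]

end Sublevel

section SublevelHaar
open Polynomial
variable {ι E : Type*} [NormedAddCommGroup E] [NormedSpace ℝ E] [FiniteDimensional ℝ E]
  [MeasurableSpace E] [BorelSpace E] (μ : Measure E) [μ.IsAddHaarMeasure]
  {φ : E →ₗ[ℝ] ℝ} {h : ι → ℝ} {A : Finset ι} {I : Set ℝ}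

lemma addHaar_setOf_linearMap_eq_const (hφ : φ ≠ 0) (t : ℝ) : μ {x | φ x = t} = 0 := by
  refine addHaar_setOf_affineMap_eq μ (f := φ.toAffineMap) (g := AffineMap.const ℝ E t)
    fun h ↦ hφ ?_
  simpa using congr_arg AffineMap.linear h

lemma restrict_convexHull_sublevel_eq_zero (hφ : φ ≠ 0) {s : Set E} {t : ℝ}
    (hs : ∀ x ∈ s, t ≤ φ x) :
    μ.restrict (convexHull ℝ s) {x | φ x ≤ t} = 0 := by
  have hhull : convexHull ℝ s ⊆ {x | t ≤ φ x} :=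
    convexHull_min hs (convex_halfSpace_ge φ.isLinear t)
  have hφ_meas : Measurable φ := φ.continuous_of_finiteDimensional.measurable
  rw [Measure.restrict_apply (measurableSet_le hφ_meas measurable_const)]
  exact measure_mono_null (fun x hx ↦ le_antisymm hx.1 (hhull hx.2))
    (addHaar_setOf_linearMap_eq_const μ hφ t)

lemma isSublevelFraction_zero (hφ : φ ≠ 0) (hA : ∀ i ∈ A, ∀ t ∈ I, t ≤ h i) :
    IsSublevelFraction μ φ h A I 0 := by
  intro t ht q hqA hqt
  have hge : ∀ x ∈ range q, t ≤ φ x := by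
    rintro _ ⟨i, rfl⟩
    by_cases hi : i ∈ A
    · exact (hA i hi t ht).trans_eq (hqA i hi).symm
    · exact (hqt i hi).ge
  rw [measureReal_def, restrict_convexHull_sublevel_eq_zero μ hφ hge, eval_zero, zero_mul,
    ENNReal.toReal_zero]

/-- Splitting the simplex at the point of height `t` on the edge from `l` to `u` gives two
simplices whose volume fractions are linear in `t`, as in the recursion for B-splines. -/
lemma IsSublevelFraction.split_edge [Fintype ι] [DecidableEq ι]
    (hι : Fintype.card ι = finrank ℝ E + 1) {l u : ι} {Ql Qu : ℝ[X]}
    (hl : IsSublevelFraction μ φ h (A.erase l) I Ql)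
    (hu : IsSublevelFraction μ φ h (A.erase u) I Qu)
    (hlA : l ∈ A) (huA : u ∈ A) (hlu : h l < h u) (hI : I ⊆ Icc (h l) (h u)) :
    IsSublevelFraction μ φ h A I
      (C (h u - h l)⁻¹ * ((C (h u) - X) * Ql + (X - C (h l)) * Qu)) := by
  intro t ht q hqA hqt
  have hne : l ≠ u := fun e ↦ hlu.ne (congr_arg h e)
  have hpos : 0 < h u - h l := sub_pos.2 hlu
  set s := (t - h l) / (h u - h l) with hs_def
  have hs : s ∈ Icc (0 : ℝ) 1 :=
    ⟨div_nonneg (sub_nonneg.2 (hI ht).1) hpos.le, (div_le_one hpos).2 (by linarith [(hI ht).2])⟩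
  set w := AffineMap.lineMap (q l) (q u) s with hw_def
  have hw : φ w = t := by
    simp only [hw_def, AffineMap.lineMap_apply_module, map_add, map_smul, hqA l hlA, hqA u huA,
      smul_eq_mul, hs_def]
    field_simp
    ring
  have hwu : w = AffineMap.lineMap (q u) (q l) (1 - s) := (AffineMap.lineMap_apply_one_sub ..).symm
  have hheight (i j : ι) (hj : j ∉ A.erase i) : φ (update q i w j) = t := by
    obtain rfl | hji := eq_or_ne j i
    · rw [Function.update_self, hw]
    · rw [Function.update_of_ne hji, hqt j fun hjA ↦ hj (Finset.mem_erase.2 ⟨hji, hjA⟩)]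
  have hkeep (i j : ι) (hj : j ∈ A.erase i) : φ (update q i w j) = h j := by
    rw [Function.update_of_ne (Finset.ne_of_mem_erase hj), hqA j (Finset.mem_of_mem_erase hj)]
  have hfin (q : ι → E) := isFiniteMeasure_restrict_convexHull μ (finite_range q)
  rw [restrict_convexHull_eq_add_update_lineMap μ hι q hne hs, measureReal_add_apply,
    hl t ht _ (hkeep l) (hheight l), hu t ht _ (hkeep u) (hheight u),
    measureReal_convexHull_update_lineMap μ hι q hne hs, hwu,
    measureReal_convexHull_update_lineMap μ hι q hne.symm ⟨by linarith [hs.2], by linarith [hs.1]⟩]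
  simp only [hs_def, eval_mul, eval_add, eval_sub, eval_C, eval_X]
  field_simp
  ring

lemma exists_isSublevelFraction [Fintype ι] (hι : Fintype.card ι = finrank ℝ E + 1)
    (hφ : φ ≠ 0) {a b : ℝ} (hA : A.Nonempty) (hh : ∀ i ∈ A, h i ∉ Ioo a b) :
    ∃ Q : ℝ[X], Q.natDegree ≤ A.card - 1 ∧ IsSublevelFraction μ φ h A (Ioo a b) Q := by
  classical
  induction A using Finset.strongInduction with
  | H A ih =>
  by_cases hlow : ∀ i ∈ A, ∀ t ∈ Ioo a b, h i ≤ t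
  · exact ⟨1, by simp, isSublevelFraction_one μ hlow⟩
  by_cases hhigh : ∀ i ∈ A, ∀ t ∈ Ioo a b, t ≤ h i
  · exact ⟨0, by simp, isSublevelFraction_zero μ hφ hhigh⟩
  push Not at hlow hhigh
  obtain ⟨u, huA, t, ht, htu⟩ := hlow
  obtain ⟨l, hlA, t', ht', hlt'⟩ := hhigh
  have hbu : b ≤ h u := not_lt.1 fun hub ↦ hh u huA ⟨ht.1.trans htu, hub⟩
  have hla : h l ≤ a := not_lt.1 fun hal ↦ hh l hlA ⟨hal, hlt'.trans ht'.2⟩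
  have hlu : h l < h u := (hla.trans_lt (ht.1.trans ht.2)).trans_le hbu
  have hne : l ≠ u := fun e ↦ hlu.ne (congr_arg h e)
  have hstep {i j : ι} (hi : i ∈ A) (hj : j ∈ A) (hij : i ≠ j) := ih (A.erase j)
    (Finset.erase_ssubset hj) ⟨i, Finset.mem_erase.2 ⟨hij, hi⟩⟩
    fun k hk ↦ hh k (Finset.mem_of_mem_erase hk)
  obtain ⟨Ql, hQl_deg, hQl⟩ := hstep huA hlA hne.symm
  obtain ⟨Qu, hQu_deg, hQu⟩ := hstep hlA huA hne
  refine ⟨_, ?_, hQl.split_edge μ hι hQu hlA huA hlu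
    fun t ht ↦ ⟨hla.trans ht.1.le, ht.2.le.trans hbu⟩⟩
  rw [Finset.card_erase_of_mem ‹_›] at hQl_deg hQu_deg
  have hcard : 1 < A.card := Finset.one_lt_card.2 ⟨l, hlA, u, huA, hne⟩
  have hfactor (Q F : ℝ[X]) (hQ : Q.natDegree ≤ A.card - 1 - 1) (hF : F.natDegree ≤ 1) :
      (F * Q).natDegree ≤ A.card - 1 :=
    (natDegree_mul_le_of_le hF hQ).trans (by omega)
  exact (natDegree_C_mul_le _ _).trans <| natDegree_add_le_of_degree_le
    (hfactor Ql _ hQl_deg (by compute_degree)) (hfactor Qu _ hQu_deg (by compute_degree))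

lemma exists_polynomial_sublevel_of_affineIndependent [Finite ι] (hφ : φ ≠ 0) {q : ι → E}
    (hq : AffineIndependent ℝ q) {a b : ℝ} (hab : ∀ i, φ (q i) ∉ Ioo a b) :
    ∃ Q : ℝ[X], Q.natDegree ≤ finrank ℝ E ∧ ∀ t ∈ Ioo a b,
      (μ.restrict (convexHull ℝ (range q))).real {x | φ x ≤ t} = Q.eval t := by
  have := Fintype.ofFinite ι
  by_cases hspan : affineSpan ℝ (range q) = ⊤
  · have hι := hq.affineSpan_eq_top_iff_card_eq_finrank_add_one.1 hspan
    have : Nonempty ι := Fintype.card_pos_iff.1 (by omega)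
    obtain ⟨Q, hQ_deg, hQ⟩ := exists_isSublevelFraction μ (h := φ ∘ q) hι hφ
      Finset.univ_nonempty fun i _ ↦ hab i
    refine ⟨Q * C (μ.real (convexHull ℝ (range q))), ?_, fun t ht ↦ ?_⟩
    · rw [Finset.card_univ, hι, Nat.add_sub_cancel] at hQ_deg
      exact (natDegree_mul_C_le _ _).trans hQ_deg
    · rw [hQ t ht q (by simp) (by simp), eval_mul, eval_C]
  · have hnull := Measure.restrict_eq_zero.2 (addHaar_convexHull_eq_zero μ hspan)
    exact ⟨0, by simp, fun t _ ↦ by simp [hnull]⟩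

end SublevelHaar

/-! ### Regular triangulations -/

section LowerFace
variable {ι E : Type*} [AddCommGroup E] [Module ℝ E] {p : ι → E} {h : ι → ℝ}

/-- `S` is the vertex set of a cell of the regular subdivision of the points `p i` obtained by
lifting them to the heights `h i`, i.e. of the projection of a face of the lower hull of the lifted
points. The affine function `ℓ` is the supporting hyperplane of that face. -/
def IsLowerFace (p : ι → E) (h : ι → ℝ) (S : Set ι) : Prop :=
  ∃ ℓ : E →ᵃ[ℝ] ℝ, (∀ i, ℓ (p i) ≤ h i) ∧ S = {i | ℓ (p i) = h i}

/-- A dependency supported on the tight set would be annihilated by the lifting; finitely many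
nonzero functionals on `ι → ℝ` have a common point where none of them vanishes. -/
lemma exists_lifting_affineIndependent_tight [Finite ι] (p : ι → E) :
    ∃ h : ι → ℝ, ∀ ℓ : E →ᵃ[ℝ] ℝ, AffineIndependent ℝ fun i : {i | ℓ (p i) = h i} ↦ p i := by
  classical
  let Dependent := {S : Set ι // ¬ AffineIndependent ℝ fun i : S ↦ p i}
  have hdep (S : Dependent) : ∃ (s : Finset S.1) (w : S.1 → ℝ), ∑ i ∈ s, w i = 0 ∧
      ∑ i ∈ s, w i • p i = 0 ∧ ∃ i ∈ s, w i ≠ 0 := by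
    simpa [affineIndependent_iff] using S.2
  choose s w hw_sum hw_comb i₀ hi₀ hwi₀ using hdep
  obtain ⟨h, hh⟩ := Dual.exists_forall_ne_zero_of_forall_exists (K := ℝ) (M := ι → ℝ)
    (fun S ↦ ∑ i ∈ s S, w S i • LinearMap.proj (i : ι))
    fun S ↦ ⟨Pi.single (i₀ S) 1, by simpa [Pi.single_apply, Subtype.val_inj, hi₀] using hwi₀ S⟩
  refine ⟨h, fun ℓ ↦ by_contra fun hℓ ↦ hh ⟨_, hℓ⟩ ?_⟩
  have htight (i : {i | ℓ (p i) = h i}) : h i = ℓ.linear (p i) + ℓ 0 := by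
    rw [← i.2]
    exact congr_fun ℓ.decomp (p i)
  simp only [LinearMap.sum_apply, LinearMap.smul_apply, LinearMap.proj_apply, htight, smul_add,
    Finset.sum_add_distrib, ← map_smul, ← map_sum, hw_comb, ← Finset.sum_smul, hw_sum, map_zero,
    zero_smul, add_zero]

lemma affineMap_le_of_mem_convexHull_tight {ℓ ℓ' : E →ᵃ[ℝ] ℝ} (hℓ' : ∀ i, ℓ' (p i) ≤ h i) {x : E}
    (hx : x ∈ convexHull ℝ (p '' {i | ℓ (p i) = h i})) : ℓ' x ≤ ℓ x := by
  have hvertex : p '' {i | ℓ (p i) = h i} ⊆ (ℓ - ℓ') ⁻¹' Ici (0 : ℝ) := by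
    rintro _ ⟨i, hi, rfl⟩
    exact sub_nonneg.2 ((hℓ' i).trans_eq hi.symm)
  exact sub_nonneg.1 (convexHull_min hvertex ((convex_Ici 0).affine_preimage (ℓ - ℓ')) hx)

end LowerFace

section LowerHull
variable {ι E : Type*} [NormedAddCommGroup E] [NormedSpace ℝ E]

lemma exists_affineMap_le_of_notMem_interior {U : Set (E × ℝ)} (hU : Convex ℝ U) {x : E} {c c' : ℝ}
    (hc : (x, c) ∉ interior U) (hc' : (x, c') ∈ interior U) (hcc' : c < c') :
    ∃ ℓ : E →ᵃ[ℝ] ℝ, ℓ x = c ∧ ∀ z ∈ U, ℓ z.1 ≤ z.2 := by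
  obtain ⟨F, hF⟩ := geometric_hahn_banach_point_open hU.interior isOpen_interior hc
  have hF_apply (y : E) (t : ℝ) : F (y, t) = F (y, 0) + t * F (0, 1) := by
    rw [← smul_eq_mul, ← map_smul, ← map_add]
    simp
  have hslope : 0 < F (0, 1) := by
    have := hF _ hc'
    rw [hF_apply, hF_apply x c'] at this
    nlinarith
  have hF_le (z : E × ℝ) (hz : z ∈ U) : F (x, c) ≤ F z := by
    have hclosure : z ∈ closure (interior U) := by
      rw [hU.closure_interior_eq_closure_of_nonempty_interior ⟨_, hc'⟩]
      exact subset_closure hz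
    exact closure_minimal (fun y hy ↦ (hF y hy).le) (isClosed_Ici.preimage F.continuous) hclosure
  let g : E →ₗ[ℝ] ℝ := F.toLinearMap ∘ₗ LinearMap.inl ℝ E ℝ
  refine ⟨AffineMap.const ℝ E c - (F (0, 1))⁻¹ • (g.toAffineMap - AffineMap.const ℝ E (g x)),
    by simp, fun z hz ↦ ?_⟩
  have hz_le := hF_le z hz
  rw [hF_apply, ← Prod.mk.eta (p := z), hF_apply z.1] at hz_le
  have hbound : c - z.2 ≤ (F (0, 1))⁻¹ * (g z.1 - g x) := by
    rw [inv_mul_eq_div, le_div_iff₀ hslope]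
    simp only [g, LinearMap.comp_apply, LinearMap.inl_apply, ContinuousLinearMap.coe_coe]
    linarith
  simpa using sub_le_comm.1 hbound

variable [Finite ι]

lemma exists_isLeast_lift (p : ι → E) (h : ι → ℝ) {x : E} (hx : x ∈ convexHull ℝ (range p)) :
    ∃ c, IsLeast {t | (x, t) ∈ convexHull ℝ (range fun i ↦ (p i, h i))} c := by
  have hcompact : IsCompact (convexHull ℝ (range fun i ↦ (p i, h i))) :=
    (finite_range _).isCompact_convexHull ℝ
  have hclosed : IsClosed {t | (x, t) ∈ convexHull ℝ (range fun i ↦ (p i, h i))} :=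
    hcompact.isClosed.preimage (by fun_prop)
  have hbdd : BddBelow {t | (x, t) ∈ convexHull ℝ (range fun i ↦ (p i, h i))} :=
    (hcompact.image continuous_snd).bddBelow.mono fun _ ht ↦ mem_image_of_mem Prod.snd ht
  exact ⟨_, hclosed.isLeast_csInf (exists_prodMk_mem_convexHull_range p h hx) hbdd⟩

lemma exists_affineMap_le_of_isLeast (p : ι → E) (h : ι → ℝ) {x : E} {c : ℝ}
    (hx : x ∈ interior (convexHull ℝ (range p)))
    (hc : IsLeast {t | (x, t) ∈ convexHull ℝ (range fun i ↦ (p i, h i))} c) :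
    ∃ ℓ : E →ᵃ[ℝ] ℝ, ℓ x = c ∧ ∀ i, ℓ (p i) ≤ h i := by
  let K := convexHull ℝ (range fun i ↦ (p i, h i))
  let epigraph : Set (E × ℝ) := {z | ∃ t ≤ z.2, (z.1, t) ∈ K}
  have hconvex : Convex ℝ epigraph := by
    rintro z₁ ⟨t₁, ht₁, hK₁⟩ z₂ ⟨t₂, ht₂, hK₂⟩ a b ha hb hab
    exact ⟨a • t₁ + b • t₂, add_le_add (smul_le_smul_of_nonneg_left ht₁ ha)
      (smul_le_smul_of_nonneg_left ht₂ hb), convex_convexHull ℝ _ hK₁ hK₂ ha hb hab⟩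
  have hnotMem : (x, c) ∉ interior epigraph := by
    intro hint
    have hcont : ContinuousAt (fun t : ℝ ↦ (x, t)) c := by fun_prop
    have hnear : ∀ᶠ t in nhdsWithin c (Iio c), (x, t) ∈ epigraph :=
      (hcont.eventually_mem (mem_interior_iff_mem_nhds.1 hint)).filter_mono nhdsWithin_le_nhds
    obtain ⟨t, ⟨t', ht', hK⟩, htc⟩ := (hnear.and self_mem_nhdsWithin).exists
    exact (hc.2 hK).not_gt (ht'.trans_lt htc)
  obtain ⟨M, hM⟩ := (((finite_range _).isCompact_convexHull ℝ : IsCompact K).image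
    continuous_snd).bddAbove
  have hmem : (x, M + 1) ∈ interior epigraph := by
    refine interior_maximal ?_ (isOpen_interior.prod isOpen_Ioi) (mk_mem_prod hx (lt_add_one M))
    rintro ⟨y, t⟩ ⟨hy, ht⟩
    obtain ⟨t', hK⟩ := exists_prodMk_mem_convexHull_range p h (interior_subset hy)
    exact ⟨t', (hM ⟨_, hK, rfl⟩).trans (le_of_lt ht), hK⟩
  obtain ⟨ℓ, hℓx, hℓ⟩ := exists_affineMap_le_of_notMem_interior hconvex hnotMem hmem
    ((hM ⟨_, hc.1, rfl⟩).trans_lt (lt_add_one M))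
  exact ⟨ℓ, hℓx, fun i ↦ hℓ (p i, h i) ⟨_, le_rfl, subset_convexHull ℝ _ (mem_range_self i)⟩⟩

lemma exists_affineMap_le_mem_convexHull_tight (p : ι → E) (h : ι → ℝ) {x : E}
    (hx : x ∈ interior (convexHull ℝ (range p))) :
    ∃ ℓ : E →ᵃ[ℝ] ℝ, (∀ i, ℓ (p i) ≤ h i) ∧ x ∈ convexHull ℝ (p '' {i | ℓ (p i) = h i}) := by
  obtain ⟨c, hc⟩ := exists_isLeast_lift p h (interior_subset hx)
  obtain ⟨ℓ, hℓx, hℓ⟩ := exists_affineMap_le_of_isLeast p h hx hc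
  refine ⟨ℓ, hℓ, ?_⟩
  let g : E × ℝ →ᵃ[ℝ] ℝ := AffineMap.snd - ℓ.comp AffineMap.fst
  have hg (i : ι) : g (p i, h i) = 0 ↔ ℓ (p i) = h i := sub_eq_zero.trans eq_comm
  have hface := mem_convexHull_image_zeros_of_nonneg (g := g) (fun i ↦ sub_nonneg.2 (hℓ i)) hc.1
    (sub_eq_zero.2 hℓx.symm)
  simp only [hg] at hface
  have himage := mem_image_of_mem (AffineMap.fst : E × ℝ →ᵃ[ℝ] E) hface
  rwa [AffineMap.image_convexHull, image_image] at himage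

end LowerHull

section Triangulation
open Polynomial
variable {ι E : Type*} [NormedAddCommGroup E] [NormedSpace ℝ E] [FiniteDimensional ℝ E]
  [MeasurableSpace E] [BorelSpace E] (μ : Measure E) [μ.IsAddHaarMeasure]

lemma IsLowerFace.aedisjoint_convexHull {p : ι → E} {h : ι → ℝ} {S S' : Set ι}
    (hS : IsLowerFace p h S) (hS' : IsLowerFace p h S') (hne : S ≠ S') :
    AEDisjoint μ (convexHull ℝ (p '' S)) (convexHull ℝ (p '' S')) := by
  obtain ⟨ℓ, hℓ, rfl⟩ := hS
  obtain ⟨ℓ', hℓ', rfl⟩ := hS'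
  exact measure_mono_null (fun x ⟨hx, hx'⟩ ↦ (affineMap_le_of_mem_convexHull_tight hℓ hx').antisymm
    (affineMap_le_of_mem_convexHull_tight hℓ' hx))
    (addHaar_setOf_affineMap_eq μ fun e ↦ hne (by rw [e]))

variable [Finite ι]

lemma iUnion_convexHull_lowerFaces_ae_eq (p : ι → E) (h : ι → ℝ) :
    (⋃ S : {S // IsLowerFace p h S}, convexHull ℝ (p '' S)) =ᵐ[μ] convexHull ℝ (range p) := by
  refine Filter.EventuallyLE.antisymm (LE.le.eventuallyLE
    (iUnion_subset fun S ↦ convexHull_mono (image_subset_range p S))) ?_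
  have hinterior := interior_ae_eq_of_null_frontier
    ((convex_convexHull ℝ (range p)).addHaar_frontier μ)
  refine hinterior.symm.le.trans (LE.le.eventuallyLE fun x hx ↦ ?_)
  obtain ⟨ℓ, hℓ, hxℓ⟩ := exists_affineMap_le_mem_convexHull_tight p h hx
  exact mem_iUnion.2 ⟨⟨_, ℓ, hℓ, rfl⟩, hxℓ⟩

lemma restrict_convexHull_eq_sum_lowerFaces (p : ι → E) (h : ι → ℝ) :
    μ.restrict (convexHull ℝ (range p)) =
      Measure.sum fun S : {S // IsLowerFace p h S} ↦ μ.restrict (convexHull ℝ (p '' S)) := by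
  rw [← Measure.restrict_congr_set (iUnion_convexHull_lowerFaces_ae_eq μ p h)]
  exact Measure.restrict_iUnion_ae
    (fun S S' hne ↦ S.2.aedisjoint_convexHull μ S'.2 (Subtype.coe_ne_coe.2 hne))
    fun S ↦ (convex_convexHull ℝ _).nullMeasurableSet μ

lemma exists_polynomial_sublevel_convexHull {φ : E →ₗ[ℝ] ℝ} (hφ : φ ≠ 0) (p : ι → E) {a b : ℝ}
    (hab : ∀ i, φ (p i) ∉ Ioo a b) :
    ∃ Q : ℝ[X], Q.natDegree ≤ finrank ℝ E ∧ ∀ t ∈ Ioo a b,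
      (μ.restrict (convexHull ℝ (range p))).real {x | φ x ≤ t} = Q.eval t := by
  obtain ⟨h, hh⟩ := exists_lifting_affineIndependent_tight p
  have hcell (S : {S // IsLowerFace p h S}) : ∃ Q : ℝ[X], Q.natDegree ≤ finrank ℝ E ∧
      ∀ t ∈ Ioo a b, (μ.restrict (convexHull ℝ (p '' S))).real {x | φ x ≤ t} = Q.eval t := by
    obtain ⟨_, ℓ, -, rfl⟩ := S
    rw [image_eq_range]
    exact exists_polynomial_sublevel_of_affineIndependent μ hφ (hh ℓ) fun i ↦ hab i
  choose Q hQ_deg hQ using hcell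
  have := Fintype.ofFinite {S // IsLowerFace p h S}
  refine ⟨∑ S, Q S, natDegree_sum_le_of_forall_le _ _ fun S _ ↦ hQ_deg S, fun t ht ↦ ?_⟩
  have hfin (S : Set ι) := isFiniteMeasure_restrict_convexHull μ (S.toFinite.image p)
  rw [restrict_convexHull_eq_sum_lowerFaces μ p h, Measure.sum_fintype, measureReal_def,
    Measure.finsetSum_apply, ENNReal.toReal_sum fun S _ ↦ measure_ne_top _ _, eval_finsetSum]
  exact Finset.sum_congr rfl fun S _ ↦ hQ S t ht

end Triangulation

/-! ### The density -/

section Density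
open Polynomial

variable {α : Type*} {mα : MeasurableSpace α} {ν : Measure α} {s : Set α}

lemma indicator_toReal_rnDeriv_ae_eq (μ : Measure α)
    (hs : MeasurableSet s) (hν : ∀ᵐ x ∂ν, x ∈ s) :
    s.indicator (fun x ↦ (ν.rnDeriv μ x).toReal) =ᵐ[μ] fun x ↦ (ν.rnDeriv μ x).toReal := by
  have hzero : ∫⁻ x in sᶜ, ν.rnDeriv μ x ∂μ = 0 :=
    nonpos_iff_eq_zero.1 ((Measure.setLIntegral_rnDeriv_le _).trans_eq hν)
  rw [lintegral_eq_zero_iff (ν.measurable_rnDeriv μ), Filter.EventuallyEq,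
    ae_restrict_iff' hs.compl] at hzero
  filter_upwards [hzero] with x hx
  by_cases hxs : x ∈ s
  · rw [indicator_of_mem hxs]
  · simp [hxs, hx hxs]

lemma withDensity_indicator_toReal_rnDeriv {μ : Measure α} [SigmaFinite ν] [SigmaFinite μ]
    (hνμ : ν ≪ μ) (hs : MeasurableSet s) (hν : ∀ᵐ x ∂ν, x ∈ s) :
    μ.withDensity (fun x ↦ ENNReal.ofReal (s.indicator (fun x ↦ (ν.rnDeriv μ x).toReal) x)) =
      ν := by
  conv_rhs => rw [← Measure.withDensity_rnDeriv_eq ν μ hνμ]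
  refine withDensity_congr_ae ?_
  filter_upwards [indicator_toReal_rnDeriv_ae_eq μ hs hν, ν.rnDeriv_ne_top μ] with x hx hx_ne
  rw [hx, ENNReal.ofReal_toReal hx_ne]

lemma ae_toReal_rnDeriv_eq_eval_derivative {ν : Measure ℝ} [IsFiniteMeasure ν] (hν : ν ≪ volume)
    {Q : ℝ[X]} {a b : ℝ} (hQ : ∀ t ∈ Ioo a b, ν.real (Iic t) = Q.eval t) :
    ∀ᵐ t, t ∈ Ioo a b → (ν.rnDeriv volume t).toReal = Q.derivative.eval t := by
  have hint : Integrable fun t ↦ (ν.rnDeriv volume t).toReal := Measure.integrable_toReal_rnDeriv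
  filter_upwards [LocallyIntegrable.ae_hasDerivAt_integral hint.locallyIntegrable] with x hx hxab
  refine (hx x).unique (((Q.hasDerivAt x).sub_const (Q.eval x)).congr_of_eventuallyEq ?_)
  filter_upwards [Ioo_mem_nhds hxab.1 hxab.2] with t ht
  rw [← intervalIntegral.integral_Iic_sub_Iic hint.integrableOn hint.integrableOn,
    Measure.setIntegral_toReal_rnDeriv hν, Measure.setIntegral_toReal_rnDeriv hν, hQ t ht,
    hQ x hxab]

lemma map_linearMap_absolutelyContinuous {E F : Type*} [NormedAddCommGroup E] [NormedSpace ℝ E]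
    [FiniteDimensional ℝ E] [MeasurableSpace E] [BorelSpace E] [NormedAddCommGroup F]
    [NormedSpace ℝ F] [MeasurableSpace F] [BorelSpace F] (μ : Measure E) [μ.IsAddHaarMeasure]
    (ν : Measure F) [ν.IsAddHaarMeasure] {φ : E →ₗ[ℝ] F} (hφ : Function.Surjective φ) :
    μ.map φ ≪ ν := by
  obtain ⟨c, -, hc⟩ := φ.exists_map_addHaar_eq_smul_addHaar μ ν hφ
  exact hc ▸ Measure.smul_absolutelyContinuous

lemma ae_map_restrict_convexHull_mem_Icc {E : Type*} [NormedAddCommGroup E] [NormedSpace ℝ E]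
    [MeasurableSpace E] [BorelSpace E] (μ : Measure E) {φ : E →ₗ[ℝ] ℝ} (hφ : Measurable φ)
    {V : Finset E} (hV : V.Nonempty) :
    ∀ᵐ t ∂(μ.restrict (convexHull ℝ (V : Set E))).map φ, t ∈ Icc (V.inf' hV φ) (V.sup' hV φ) := by
  have hsub : convexHull ℝ (V : Set E) ⊆ φ ⁻¹' Icc (V.inf' hV φ) (V.sup' hV φ) :=
    convexHull_min (fun _ hv ↦ mem_preimage.2 ⟨Finset.inf'_le φ hv, Finset.le_sup' φ hv⟩)
      ((convex_Icc _ _).linear_preimage φ)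
  exact (ae_map_iff hφ.aemeasurable measurableSet_Icc).2 <| ae_restrict_of_forall_mem
    (V.finite_toSet.isCompact_convexHull ℝ).measurableSet hsub

end Density

theorem polytope_projection_is_spline_general {E : Type*} [NormedAddCommGroup E] [NormedSpace ℝ E]
    [FiniteDimensional ℝ E] [MeasurableSpace E] [BorelSpace E] (μ : Measure E)
    [μ.IsAddHaarMeasure] {φ : E →ₗ[ℝ] ℝ} (hφ : φ ≠ 0) {V : Finset E} (hV : V.Nonempty) :
    ∃ ρ : ℝ → ℝ,
      (∀ t, 0 ≤ ρ t) ∧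
      (μ.restrict (convexHull ℝ (V : Set E))).map φ =
        volume.withDensity (fun t ↦ ENNReal.ofReal (ρ t)) ∧
      (∀ t ∉ Icc (V.inf' hV φ) (V.sup' hV φ), ρ t = 0) ∧
      ∀ a b : ℝ, (∀ z ∈ V, φ z ∉ Ioo a b) →
        ∃ q : Polynomial ℝ, q.natDegree ≤ finrank ℝ E - 1 ∧
          ∀ᵐ t, t ∈ Ioo a b → ρ t = q.eval t := by
  have hφ_meas : Measurable φ := φ.continuous_of_finiteDimensional.measurable
  have := isFiniteMeasure_restrict_convexHull μ V.finite_toSet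
  let ν := (μ.restrict (convexHull ℝ (V : Set E))).map φ
  have hν : ν ≪ volume := (Measure.restrict_le_self.absolutelyContinuous.map hφ_meas).trans
    (map_linearMap_absolutelyContinuous μ volume (LinearMap.surjective hφ))
  have hsupp := ae_map_restrict_convexHull_mem_Icc μ hφ_meas hV
  refine ⟨(Icc (V.inf' hV φ) (V.sup' hV φ)).indicator fun t ↦ (ν.rnDeriv volume t).toReal,
    indicator_nonneg fun _ _ ↦ ENNReal.toReal_nonneg,
    (withDensity_indicator_toReal_rnDeriv hν measurableSet_Icc hsupp).symm,
    fun t ht ↦ indicator_of_notMem ht _, fun a b hab ↦ ?_⟩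
  obtain ⟨Q, hQ_deg, hQ⟩ := exists_polynomial_sublevel_convexHull μ hφ ((↑) : V → E)
    fun v ↦ hab v v.2
  have hcdf (t : ℝ) (ht : t ∈ Ioo a b) : ν.real (Iic t) = Q.eval t := by
    rw [← hQ t ht, map_measureReal_apply hφ_meas measurableSet_Iic, Subtype.range_coe]
    rfl
  refine ⟨Q.derivative, Q.natDegree_derivative_le.trans (Nat.sub_le_sub_right hQ_deg 1), ?_⟩
  filter_upwards [indicator_toReal_rnDeriv_ae_eq volume measurableSet_Icc hsupp,
    ae_toReal_rnDeriv_eq_eval_derivative hν hcdf] with t hρt hQt ht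
  rw [hρt, hQt ht]

/-- **Projections of polytopes are spline measures.** Let `V ⊂ ℝ^d` be a finite
set whose convex hull `P` has nonempty interior, and let `ν` be the pushforward
of Lebesgue measure restricted to `P` under the first-coordinate projection.
Then `ν` has a nonnegative density `ρ` supported on
`[min π(V), max π(V)]` which is piecewise polynomial of degree at most `d-1`
with breakpoints among the projected vertex coordinates `π(V)`. -/
theorem polytope_projection_is_spline (d : ℕ) (hd : 0 < d)
    (V : Finset (Fin d → ℝ)) (hV : V.Nonempty)
    (hint : (interior (convexHull ℝ (V : Set (Fin d → ℝ)))).Nonempty) :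
    ∃ ρ : ℝ → ℝ,
      (∀ t, 0 ≤ ρ t) ∧
      (Measure.map (fun z : Fin d → ℝ => z ⟨0, hd⟩)
          (volume.restrict (convexHull ℝ (V : Set (Fin d → ℝ))))
        = volume.withDensity fun t => ENNReal.ofReal (ρ t)) ∧
      (∀ t : ℝ, t ∉ Set.Icc (V.inf' hV fun z => z ⟨0, hd⟩)
          (V.sup' hV fun z => z ⟨0, hd⟩) → ρ t = 0) ∧
      (∀ a b : ℝ, (∃ z ∈ V, z ⟨0, hd⟩ = a) → (∃ z ∈ V, z ⟨0, hd⟩ = b) → a < b →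
        (∀ z ∈ V, ¬(a < z ⟨0, hd⟩ ∧ z ⟨0, hd⟩ < b)) →
        ∃ q : Polynomial ℝ, q.natDegree ≤ d - 1 ∧
          ∀ᵐ t ∂(volume : Measure ℝ), t ∈ Set.Ioo a b → ρ t = q.eval t) := by
  have hproj : (LinearMap.proj ⟨0, hd⟩ : (Fin d → ℝ) →ₗ[ℝ] ℝ) ≠ 0 := fun h ↦ by
    simpa using LinearMap.congr_fun h 1
  obtain ⟨ρ, hρ, hdensity, hsupport, hpiece⟩ :=
    polytope_projection_is_spline_general volume hproj hV
  rw [finrank_fin_fun] at hpiece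
  exact ⟨ρ, hρ, hdensity, hsupport, fun a b _ _ _ ↦ hpiece a b⟩
end

section
/- Let d ≥ 2 and let P ⊂ ℝ^d be a compact convex set with nonempty interior. Define ρ(x) to be the (d−1)-dimensional Lebesgue measure of the slice {z' ∈ ℝ^{d−1} : (x, z') ∈ P}. Then the function x ↦ ρ(x)^{1/(d−1)} is concave on the projection interval {x ∈ ℝ : ∃ z', (x,z') ∈ P}. -/
open MeasureTheory Set

open scoped ENNReal Pointwise

/-!
The slices of a convex set satisfy `s • P_x + t • P_y ⊆ P_{s x + t y}`, so the concavity of the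
`n`-th root of their volumes follows from the Brunn–Minkowski inequality
`|A|^{1/n} + |B|^{1/n} ≤ |A + B|^{1/n}` in the fibre. Rescaling `A` and `B` to volume one reduces
it to the multiplicative inequality `|A|^s |B|^t ≤ |s A + t B|`, which is the Prékopa–Leindler
inequality for indicator functions. Prékopa–Leindler passes to products and linear images of
measures, so only the real line remains. There, after normalizing `f` and `g` to have supremum one,
the layer-cake formula and AM–GM reduce it to `|X| + |Y| ≤ |X + Y|`, which holds because, for
compact `X` and `Y`, the sumset contains a translate of `X` and a translate of `Y` meeting only in
the point `max X + min Y`.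
-/

section Sumset

theorem measure_le_measure_add_of_nonempty {G : Type*} [AddGroup G] [MeasurableSpace G]
    [MeasurableAdd G] (μ : Measure G) [μ.IsAddLeftInvariant] {A : Set G} (hA : A.Nonempty)
    (B : Set G) : μ B ≤ μ (A + B) := by
  obtain ⟨a, ha⟩ := hA
  calc μ B = μ (a +ᵥ B) := (measure_vadd μ a B).symm
    _ ≤ μ (A + B) := measure_mono (vadd_set_subset_add ha)

theorem volume_add_volume_le_of_isCompact {K L : Set ℝ} (hK : IsCompact K) (hL : IsCompact L)
    (hKn : K.Nonempty) (hLn : L.Nonempty) : volume K + volume L ≤ volume (K + L) := by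
  obtain ⟨k, hkK, hk⟩ := hK.exists_isGreatest hKn
  obtain ⟨l, hlL, hl⟩ := hL.exists_isLeast hLn
  have inter_subset : (l +ᵥ K) ∩ (k +ᵥ L) ⊆ {k + l} := by
    rintro _ ⟨⟨x, hx, rfl⟩, ⟨y, hy, hxy⟩⟩
    simp only [vadd_eq_add, mem_singleton_iff] at hxy ⊢
    linarith [hk hx, hl hy]
  have inter_null : volume ((l +ᵥ K) ∩ (k +ᵥ L)) = 0 :=
    measure_mono_null inter_subset Real.volume_singleton
  calc volume K + volume L = volume (l +ᵥ K) + volume (k +ᵥ L) := by simp only [measure_vadd]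
    _ = volume ((l +ᵥ K) ∪ (k +ᵥ L)) := by
      rw [← measure_union_add_inter _ (hL.measurableSet.const_vadd k), inter_null, add_zero]
    _ ≤ volume (K + L) := measure_mono <| union_subset
      (add_comm L K ▸ vadd_set_subset_add hlL) (vadd_set_subset_add hkK)

theorem volume_add_volume_le_volume_add {X Y : Set ℝ} (hX : MeasurableSet X)
    (hY : MeasurableSet Y) (hXn : X.Nonempty) (hYn : Y.Nonempty) :
    volume X + volume Y ≤ volume (X + Y) := by
  rcases eq_or_ne (volume X) 0 with hX0 | hX0
  · simpa only [hX0, zero_add] using measure_le_measure_add_of_nonempty volume hXn Y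
  rcases eq_or_ne (volume Y) 0 with hY0 | hY0
  · simpa only [hY0, add_zero, add_comm Y] using measure_le_measure_add_of_nonempty volume hYn X
  refine le_of_forall_lt fun c hc => ?_
  obtain ⟨a, ha, b, hb, hcab⟩ := ENNReal.exists_lt_add_of_lt_add hc hX0 hY0
  obtain ⟨K, hKX, hK, haK⟩ := hX.exists_lt_isCompact ha
  obtain ⟨L, hLY, hL, hbL⟩ := hY.exists_lt_isCompact hb
  calc c < a + b := hcab
    _ ≤ volume K + volume L := by gcongr
    _ ≤ volume (K + L) := volume_add_volume_le_of_isCompact hK hL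
      (nonempty_of_measure_ne_zero haK.ne_bot) (nonempty_of_measure_ne_zero hbL.ne_bot)
    _ ≤ volume (X + Y) := by gcongr

theorem ofReal_mul_volume_add_le_volume_smul_add {X Y : Set ℝ} {s t : ℝ} (hs : 0 ≤ s)
    (ht : 0 ≤ t) (hX : MeasurableSet X) (hY : MeasurableSet Y) (hXn : X.Nonempty)
    (hYn : Y.Nonempty) :
    ENNReal.ofReal s * volume X + ENNReal.ofReal t * volume Y ≤ volume (s • X + t • Y) := by
  simpa [Measure.addHaar_smul, abs_of_nonneg hs, abs_of_nonneg ht] using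
    volume_add_volume_le_volume_add (hX.const_smul₀ s) (hY.const_smul₀ t) hXn.smul_set hYn.smul_set

end Sumset

section GeometricMean

variable {s t : ℝ}

theorem ennreal_rpow_mul_rpow_self (a : ℝ≥0∞) (hs : 0 ≤ s) (ht : 0 ≤ t) (hst : s + t = 1) :
    a ^ s * a ^ t = a := by
  rw [← ENNReal.rpow_add_of_nonneg s t hs ht, hst, ENNReal.rpow_one]

theorem ennreal_mul_rpow_mul_mul_rpow (a b c d : ℝ≥0∞) (hs : 0 ≤ s) (ht : 0 ≤ t) :
    (a * b) ^ s * (c * d) ^ t = a ^ s * c ^ t * (b ^ s * d ^ t) := by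
  rw [ENNReal.mul_rpow_of_nonneg _ _ hs, ENNReal.mul_rpow_of_nonneg _ _ ht, mul_mul_mul_comm]

theorem ennreal_geom_mean_le_arith_mean2_weighted (a b : ℝ≥0∞) (hs : 0 < s) (ht : 0 < t)
    (hst : s + t = 1) : a ^ s * b ^ t ≤ ENNReal.ofReal s * a + ENNReal.ofReal t * b := by
  have hconj : (s⁻¹).HolderConjugate t⁻¹ :=
    Real.holderConjugate_iff.2 ⟨(one_lt_inv₀ hs).2 (by linarith), by simpa only [inv_inv]⟩
  simpa [← ENNReal.rpow_mul, hs.ne', ht.ne', ENNReal.ofReal_inv_of_pos, hs, ht, div_eq_mul_inv,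
    mul_comm] using ENNReal.young_inequality (a ^ s) (b ^ t) hconj

end GeometricMean

section Lintegral

variable {α : Type*} [MeasurableSpace α] (μ : Measure α) {f : α → ℝ≥0∞}

theorem lintegral_eq_setLIntegral_measure_ofReal_lt (hf : AEMeasurable f μ)
    (hfin : ∀ x, f x ≠ ∞) :
    ∫⁻ x, f x ∂μ = ∫⁻ r in Ioi (0 : ℝ), μ {x | ENNReal.ofReal r < f x} := by
  have layer_cake := lintegral_eq_lintegral_meas_lt μ (f := fun x => (f x).toReal)
    (.of_forall fun x => ENNReal.toReal_nonneg) hf.ennreal_toReal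
  simp only [ENNReal.ofReal_toReal (hfin _)] at layer_cake
  rw [layer_cake]
  refine setLIntegral_congr_fun measurableSet_Ioi fun r hr => ?_
  simp only [ENNReal.ofReal_lt_iff_lt_toReal (le_of_lt hr) (hfin _)]

theorem tendsto_lintegral_min_natCast (hf : AEMeasurable f μ) :
    Filter.Tendsto (fun n : ℕ => ∫⁻ x, min (f x) n ∂μ) Filter.atTop (nhds (∫⁻ x, f x ∂μ)) := by
  refine lintegral_tendsto_of_tendsto_of_monotone (fun n => by fun_prop)
    (.of_forall fun x m n hmn => ?_) (.of_forall fun x => ?_)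
  · dsimp only
    gcongr
  · simpa only [min_top_right] using
      (tendsto_const_nhds (x := f x)).min ENNReal.tendsto_nat_nhds_top

end Lintegral

/-- The Prékopa–Leindler inequality for the measure `μ` on a real vector space: whenever `h`
dominates, at each convex combination `s • x + t • y`, the geometric mean of `f x` and `g y` with
the same weights, the integral of `h` dominates that geometric mean of the integrals. -/
def IsPrekopaLeindler {E : Type*} [AddCommMonoid E] [Module ℝ E] [MeasurableSpace E]
    (μ : Measure E) : Prop :=
  ∀ ⦃s t : ℝ⦄, 0 < s → 0 < t → s + t = 1 → ∀ ⦃f g h : E → ℝ≥0∞⦄,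
    Measurable f → Measurable g → Measurable h →
    (∀ x y, f x ^ s * g y ^ t ≤ h (s • x + t • y)) →
    (∫⁻ x, f x ∂μ) ^ s * (∫⁻ x, g x ∂μ) ^ t ≤ ∫⁻ x, h x ∂μ

theorem smul_superlevel_add_smul_superlevel_subset {E : Type*} [Add E] [SMul ℝ E]
    {f g h : E → ℝ≥0∞} {s t : ℝ} (hs : 0 < s) (ht : 0 < t) (hst : s + t = 1)
    (hfgh : ∀ x y, f x ^ s * g y ^ t ≤ h (s • x + t • y)) (r : ℝ≥0∞) :
    s • {x | r < f x} + t • {y | r < g y} ⊆ {z | r < h z} := by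
  rintro _ ⟨_, ⟨x, hx, rfl⟩, _, ⟨y, hy, rfl⟩, rfl⟩
  calc r = r ^ s * r ^ t := (ennreal_rpow_mul_rpow_self r hs.le ht.le hst).symm
    _ < f x ^ s * g y ^ t :=
        ENNReal.mul_lt_mul (ENNReal.rpow_lt_rpow hx hs) (ENNReal.rpow_lt_rpow hy ht)
    _ ≤ h (s • x + t • y) := hfgh x y

section RealLine

variable {s t : ℝ} {f g h : ℝ → ℝ≥0∞}

theorem ofReal_mul_volume_superlevel_add_le (hs : 0 < s) (ht : 0 < t) (hst : s + t = 1)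
    (hf : Measurable f) (hg : Measurable g) (hf1 : ⨆ x, f x = 1) (hg1 : ⨆ x, g x = 1)
    (hfgh : ∀ x y, f x ^ s * g y ^ t ≤ h (s • x + t • y)) (r : ℝ≥0∞) :
    ENNReal.ofReal s * volume {x | r < f x} + ENNReal.ofReal t * volume {y | r < g y} ≤
      volume {z | r < h z} := by
  rcases lt_or_ge r 1 with hr | hr
  · obtain ⟨x, hx⟩ := lt_iSup_iff.1 (hr.trans_eq hf1.symm)
    obtain ⟨y, hy⟩ := lt_iSup_iff.1 (hr.trans_eq hg1.symm)
    exact (ofReal_mul_volume_add_le_volume_smul_add hs.le ht.le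
      (hf measurableSet_Ioi) (hg measurableSet_Ioi) ⟨x, hx⟩ ⟨y, hy⟩).trans
      (measure_mono (smul_superlevel_add_smul_superlevel_subset hs ht hst hfgh r))
  · have hfr : ∀ x, ¬ r < f x := fun x => ((hf1 ▸ le_iSup f x).trans hr).not_gt
    have hgr : ∀ y, ¬ r < g y := fun y => ((hg1 ▸ le_iSup g y).trans hr).not_gt
    simp [hfr, hgr]

theorem ofReal_mul_lintegral_add_le_of_iSup_eq_one (hs : 0 < s) (ht : 0 < t) (hst : s + t = 1)
    (hf : Measurable f) (hg : Measurable g) (hh : Measurable h)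
    (hf1 : ⨆ x, f x = 1) (hg1 : ⨆ x, g x = 1)
    (hfgh : ∀ x y, f x ^ s * g y ^ t ≤ h (s • x + t • y)) :
    ENNReal.ofReal s * (∫⁻ x, f x) + ENNReal.ofReal t * (∫⁻ x, g x) ≤ ∫⁻ x, h x := by
  have hf_le : ∀ x, f x ≤ 1 := fun x => hf1 ▸ le_iSup f x
  have hg_le : ∀ x, g x ≤ 1 := fun x => hg1 ▸ le_iSup g x
  have hfgh_min : ∀ x y, f x ^ s * g y ^ t ≤ min (h (s • x + t • y)) 1 := fun x y =>
    le_min (hfgh x y) (mul_le_one' (ENNReal.rpow_le_one (hf_le x) hs.le)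
      (ENNReal.rpow_le_one (hg_le y) ht.le))
  have ne_top {k : ℝ → ℝ≥0∞} (hk : ∀ x, k x ≤ 1) (x : ℝ) : k x ≠ ∞ :=
    ne_top_of_le_ne_top ENNReal.one_ne_top (hk x)
  have measurable_level : Measurable fun r : ℝ => volume {x | ENNReal.ofReal r < f x} :=
    Antitone.measurable fun _ _ hab => measure_mono fun _ hx =>
      (ENNReal.ofReal_le_ofReal hab).trans_lt hx
  calc ENNReal.ofReal s * (∫⁻ x, f x) + ENNReal.ofReal t * (∫⁻ x, g x)
      = ∫⁻ r in Ioi (0 : ℝ), (ENNReal.ofReal s * volume {x | ENNReal.ofReal r < f x} +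
          ENNReal.ofReal t * volume {x | ENNReal.ofReal r < g x}) := by
        rw [lintegral_eq_setLIntegral_measure_ofReal_lt _ hf.aemeasurable (ne_top hf_le),
          lintegral_eq_setLIntegral_measure_ofReal_lt _ hg.aemeasurable (ne_top hg_le),
          lintegral_add_left (measurable_level.const_mul _),
          lintegral_const_mul' _ _ ENNReal.ofReal_ne_top,
          lintegral_const_mul' _ _ ENNReal.ofReal_ne_top]
    _ ≤ ∫⁻ r in Ioi (0 : ℝ), volume {x | ENNReal.ofReal r < min (h x) 1} :=
        lintegral_mono fun r =>
          ofReal_mul_volume_superlevel_add_le hs ht hst hf hg hf1 hg1 hfgh_min (ENNReal.ofReal r)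
    _ = ∫⁻ x, min (h x) 1 := (lintegral_eq_setLIntegral_measure_ofReal_lt _
        (hh.min measurable_const).aemeasurable (ne_top fun _ => min_le_right _ _)).symm
    _ ≤ ∫⁻ x, h x := lintegral_mono fun _ => min_le_left _ _

theorem lintegral_rpow_mul_lintegral_rpow_le_of_iSup_ne_top (hs : 0 < s) (ht : 0 < t)
    (hst : s + t = 1) (hf : Measurable f) (hg : Measurable g) (hh : Measurable h)
    (hf_top : ⨆ x, f x ≠ ∞) (hg_top : ⨆ x, g x ≠ ∞)
    (hfgh : ∀ x y, f x ^ s * g y ^ t ≤ h (s • x + t • y)) :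
    (∫⁻ x, f x) ^ s * (∫⁻ x, g x) ^ t ≤ ∫⁻ x, h x := by
  set M := ⨆ x, f x with hM
  set N := ⨆ x, g x with hN
  rcases eq_or_ne M 0 with hM0 | hM0
  · have hf0 : ∀ x, f x = 0 := by simpa [hM] using hM0
    simp [hf0, hs]
  rcases eq_or_ne N 0 with hN0 | hN0
  · have hg0 : ∀ x, g x = 0 := by simpa [hN] using hN0
    simp [hg0, ht]
  have normalized := (ennreal_geom_mean_le_arith_mean2_weighted _ _ hs ht hst).trans <|
    ofReal_mul_lintegral_add_le_of_iSup_eq_one (f := fun x => M⁻¹ * f x)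
      (g := fun x => N⁻¹ * g x) (h := fun x => (M⁻¹ ^ s * N⁻¹ ^ t) * h x) hs ht hst
      (by fun_prop) (by fun_prop) (by fun_prop)
      (by rw [← ENNReal.mul_iSup, ← hM, ENNReal.inv_mul_cancel hM0 hf_top])
      (by rw [← ENNReal.mul_iSup, ← hN, ENNReal.inv_mul_cancel hN0 hg_top])
      (fun x y => by
        rw [ennreal_mul_rpow_mul_mul_rpow _ _ _ _ hs.le ht.le]
        gcongr
        exact hfgh x y)
  have factor_ne_zero : M⁻¹ ^ s * N⁻¹ ^ t ≠ 0 := by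
    simp [ENNReal.rpow_eq_zero_iff, hf_top, hg_top, hs.not_gt, ht.not_gt]
  have factor_ne_top : M⁻¹ ^ s * N⁻¹ ^ t ≠ ∞ := ENNReal.mul_ne_top
    (ENNReal.rpow_ne_top_of_nonneg hs.le (ENNReal.inv_ne_top.2 hM0))
    (ENNReal.rpow_ne_top_of_nonneg ht.le (ENNReal.inv_ne_top.2 hN0))
  rwa [lintegral_const_mul _ hf, lintegral_const_mul _ hg, lintegral_const_mul _ hh,
    ennreal_mul_rpow_mul_mul_rpow _ _ _ _ hs.le ht.le,
    ENNReal.mul_le_mul_iff_right factor_ne_zero factor_ne_top] at normalized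

theorem isPrekopaLeindler_volume_real : IsPrekopaLeindler (volume : Measure ℝ) := by
  intro s t hs ht hst f g h hf hg hh hfgh
  rcases eq_or_ne (∫⁻ x, f x) 0 with hf0 | hf0
  · simp [hf0, hs]
  rcases eq_or_ne (∫⁻ x, g x) 0 with hg0 | hg0
  · simp [hg0, ht]
  have tendsto_truncated := ENNReal.Tendsto.mul
    ((tendsto_lintegral_min_natCast volume hf.aemeasurable).ennrpow_const s)
    (Or.inl (by simp [ENNReal.rpow_eq_zero_iff, hf0, hs.not_gt]))
    ((tendsto_lintegral_min_natCast volume hg.aemeasurable).ennrpow_const t)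
    (Or.inl (by simp [ENNReal.rpow_eq_zero_iff, hg0, ht.not_gt]))
  have iSup_min_ne_top (k : ℝ → ℝ≥0∞) (n : ℕ) : ⨆ x, min (k x) n ≠ ∞ :=
    ne_top_of_le_ne_top (ENNReal.natCast_ne_top n) (iSup_le fun _ => min_le_right _ _)
  refine le_of_tendsto' tendsto_truncated fun n =>
    lintegral_rpow_mul_lintegral_rpow_le_of_iSup_ne_top hs ht hst (by fun_prop) (by fun_prop) hh
      (iSup_min_ne_top f n) (iSup_min_ne_top g n) fun x y => le_trans ?_ (hfgh x y)
  gcongr <;> exact min_le_left _ _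

end RealLine

theorem isPrekopaLeindler_dirac {E : Type*} [AddCommMonoid E] [Module ℝ E] [MeasurableSpace E]
    (a : E) : IsPrekopaLeindler (Measure.dirac a) := by
  intro s t _ _ hst f g h hf hg hh hfgh
  simpa only [lintegral_dirac' a hf, lintegral_dirac' a hg, lintegral_dirac' a hh,
    Convex.combo_self hst] using hfgh a a

namespace IsPrekopaLeindler

variable {E F : Type*} [AddCommMonoid E] [Module ℝ E] [MeasurableSpace E]
  [AddCommMonoid F] [Module ℝ F] [MeasurableSpace F] {μ : Measure E} {ν : Measure F}

theorem map (hμ : IsPrekopaLeindler μ) (L : E →ₗ[ℝ] F) (hL : Measurable L) :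
    IsPrekopaLeindler (μ.map L) := by
  intro s t hs ht hst f g h hf hg hh hfgh
  simp only [lintegral_map hf hL, lintegral_map hg hL, lintegral_map hh hL]
  exact hμ hs ht hst (hf.comp hL) (hg.comp hL) (hh.comp hL) fun x y => by
    simpa only [Function.comp_apply, map_add, map_smul] using hfgh (L x) (L y)

theorem smul (hμ : IsPrekopaLeindler μ) (c : ℝ≥0∞) : IsPrekopaLeindler (c • μ) := by
  intro s t hs ht hst f g h hf hg hh hfgh
  simp only [lintegral_smul_measure, smul_eq_mul]
  rw [ennreal_mul_rpow_mul_mul_rpow _ _ _ _ hs.le ht.le,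
    ennreal_rpow_mul_rpow_self c hs.le ht.le hst]
  gcongr
  exact hμ hs ht hst hf hg hh hfgh

theorem prod [SFinite ν] (hμ : IsPrekopaLeindler μ) (hν : IsPrekopaLeindler ν) :
    IsPrekopaLeindler (μ.prod ν) := by
  intro s t hs ht hst f g h hf hg hh hfgh
  rw [lintegral_prod _ hf.aemeasurable, lintegral_prod _ hg.aemeasurable,
    lintegral_prod _ hh.aemeasurable]
  exact hμ hs ht hst hf.lintegral_prod_right' hg.lintegral_prod_right' hh.lintegral_prod_right'
    fun a b => hν hs ht hst (hf.comp measurable_prodMk_left) (hg.comp measurable_prodMk_left)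
      (hh.comp measurable_prodMk_left) fun x y => hfgh (a, x) (b, y)

theorem measure_rpow_mul_measure_rpow_le (hμ : IsPrekopaLeindler μ) {A B : Set E}
    (hA : NullMeasurableSet A μ) (hB : NullMeasurableSet B μ) {s t : ℝ} (hs : 0 < s) (ht : 0 < t)
    (hst : s + t = 1) : μ A ^ s * μ B ^ t ≤ μ (s • A + t • B) := by
  obtain ⟨A', hA'A, hA', hAA'⟩ := hA.exists_measurable_subset_ae_eq
  obtain ⟨B', hB'B, hB', hBB'⟩ := hB.exists_measurable_subset_ae_eq
  set C := toMeasurable μ (s • A + t • B)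
  have hC : MeasurableSet C := measurableSet_toMeasurable _ _
  have mem_C {x y : E} (hx : x ∈ A') (hy : y ∈ B') : s • x + t • y ∈ C :=
    subset_toMeasurable _ _
      (add_mem_add (smul_mem_smul_set (hA'A hx)) (smul_mem_smul_set (hB'B hy)))
  have indicator_le (x y : E) : A'.indicator (1 : E → ℝ≥0∞) x ^ s * B'.indicator 1 y ^ t ≤
      C.indicator 1 (s • x + t • y) := by
    by_cases hx : x ∈ A'
    · by_cases hy : y ∈ B'
      · simp [hx, hy, mem_C hx hy]
      · simp [hy, ht]
    · simp [hx, hs]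
  simpa only [lintegral_indicator_one, hA', hB', hC, measure_congr hAA', measure_congr hBB',
    C, measure_toMeasurable] using hμ hs ht hst (measurable_one.indicator hA')
      (measurable_one.indicator hB') (measurable_one.indicator hC) indicator_le

end IsPrekopaLeindler

section Haar

variable {E F : Type*} [NormedAddCommGroup E] [NormedSpace ℝ E] [MeasurableSpace E] [BorelSpace E]
  [NormedAddCommGroup F] [NormedSpace ℝ F] [MeasurableSpace F] [BorelSpace F]
  [FiniteDimensional ℝ F]

theorem IsPrekopaLeindler.of_continuousLinearEquiv {ν : Measure E} [ν.IsAddHaarMeasure]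
    (hν : IsPrekopaLeindler ν) (e : E ≃L[ℝ] F) (μ : Measure F) [μ.IsAddHaarMeasure] :
    IsPrekopaLeindler μ := by
  rw [Measure.isAddLeftInvariant_eq_smul μ (ν.map e)]
  exact (hν.map (e : E →ₗ[ℝ] F) e.continuous.measurable).smul _

theorem isPrekopaLeindler_volume_pi (n : ℕ) :
    IsPrekopaLeindler (volume : Measure (Fin n → ℝ)) := by
  induction n with
  | zero =>
    rw [volume_pi, Measure.pi_of_empty _ 0]
    exact isPrekopaLeindler_dirac 0
  | succ n ih =>
    exact (isPrekopaLeindler_volume_real.prod ih).of_continuousLinearEquiv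
      (Fin.consEquivL ℝ fun _ : Fin (n + 1) => ℝ) volume

theorem isPrekopaLeindler_of_isAddHaarMeasure (μ : Measure F) [μ.IsAddHaarMeasure] :
    IsPrekopaLeindler μ :=
  (isPrekopaLeindler_volume_pi (Module.finrank ℝ F)).of_continuousLinearEquiv
    (ContinuousLinearEquiv.ofFinrankEq (Module.finrank_fin_fun ℝ)) μ

end Haar

/-- The `n`-th root of the measure of a set, where `n` is the dimension of the ambient space. It is
the volume radius up to the normalization by the unit ball, and is homogeneous of degree one. In
dimension zero the exponent is the junk value `0⁻¹ = 0`. -/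
noncomputable def volumeRadius {F : Type*} [AddCommGroup F] [Module ℝ F] [MeasurableSpace F]
    (μ : Measure F) (A : Set F) : ℝ≥0∞ :=
  μ A ^ (Module.finrank ℝ F : ℝ)⁻¹

theorem volumeRadius_le_of_measure_le {F : Type*} [AddCommGroup F] [Module ℝ F] [MeasurableSpace F]
    {μ : Measure F} {A B : Set F} (h : μ A ≤ μ B) : volumeRadius μ A ≤ volumeRadius μ B :=
  ENNReal.rpow_le_rpow h (by positivity)

section BrunnMinkowski

variable {F : Type*} [NormedAddCommGroup F] [NormedSpace ℝ F] [MeasurableSpace F] [BorelSpace F]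
  [FiniteDimensional ℝ F] [Nontrivial F] (μ : Measure F) [μ.IsAddHaarMeasure] {A B : Set F}

theorem volumeRadius_smul {r : ℝ} (hr : 0 ≤ r) (A : Set F) :
    volumeRadius μ (r • A) = ENNReal.ofReal r * volumeRadius μ A := by
  rw [volumeRadius, volumeRadius, Measure.addHaar_smul_of_nonneg μ hr,
    ENNReal.mul_rpow_of_nonneg _ _ (by positivity), ENNReal.ofReal_pow hr,
    ENNReal.pow_rpow_inv_natCast Module.finrank_pos.ne']

theorem measure_inv_volumeRadius_smul_eq_one (hA0 : volumeRadius μ A ≠ 0)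
    (hA_top : volumeRadius μ A ≠ ∞) : μ ((volumeRadius μ A).toReal⁻¹ • A) = 1 := by
  have hpos : 0 < (volumeRadius μ A).toReal := ENNReal.toReal_pos hA0 hA_top
  have radius_eq_one : volumeRadius μ ((volumeRadius μ A).toReal⁻¹ • A) = 1 := by
    rw [volumeRadius_smul μ (inv_nonneg.2 hpos.le), ENNReal.ofReal_inv_of_pos hpos,
      ENNReal.ofReal_toReal hA_top, ENNReal.inv_mul_cancel hA0 hA_top]
  rw [← ENNReal.rpow_inv_natCast_pow (Module.finrank_pos (R := ℝ) (M := F)).ne' (μ _),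
    ← volumeRadius, radius_eq_one, one_pow]

theorem volumeRadius_add_le_of_ne_zero_of_ne_top (hA : NullMeasurableSet A μ)
    (hB : NullMeasurableSet B μ) (hA0 : volumeRadius μ A ≠ 0) (hA_top : volumeRadius μ A ≠ ∞)
    (hB0 : volumeRadius μ B ≠ 0) (hB_top : volumeRadius μ B ≠ ∞) :
    volumeRadius μ A + volumeRadius μ B ≤ volumeRadius μ (A + B) := by
  set a := (volumeRadius μ A).toReal
  set b := (volumeRadius μ B).toReal
  have ha : 0 < a := ENNReal.toReal_pos hA0 hA_top
  have hb : 0 < b := ENNReal.toReal_pos hB0 hB_top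
  have combination_eq : (a / (a + b)) • a⁻¹ • A + (b / (a + b)) • b⁻¹ • B =
      (a + b)⁻¹ • (A + B) := by
    rw [smul_smul, smul_smul, smul_add]
    congr 2 <;> field_simp
  have one_le_measure : 1 ≤ μ ((a + b)⁻¹ • (A + B)) := by
    simpa only [measure_inv_volumeRadius_smul_eq_one μ hA0 hA_top, a, b,
      measure_inv_volumeRadius_smul_eq_one μ hB0 hB_top, ENNReal.one_rpow, one_mul,
      combination_eq] using
      (isPrekopaLeindler_of_isAddHaarMeasure μ).measure_rpow_mul_measure_rpow_le
        (Measure.NullMeasurableSet.const_smul hA a⁻¹) (Measure.NullMeasurableSet.const_smul hB b⁻¹)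
        (s := a / (a + b)) (t := b / (a + b)) (by positivity) (by positivity) (by field_simp)
  have one_le_radius : 1 ≤ volumeRadius μ ((a + b)⁻¹ • (A + B)) :=
    ENNReal.one_le_rpow one_le_measure (by simp [Module.finrank_pos])
  calc volumeRadius μ A + volumeRadius μ B = ENNReal.ofReal (a + b) * 1 := by
        rw [ENNReal.ofReal_add ha.le hb.le, ENNReal.ofReal_toReal hA_top,
          ENNReal.ofReal_toReal hB_top, mul_one]
    _ ≤ ENNReal.ofReal (a + b) * volumeRadius μ ((a + b)⁻¹ • (A + B)) := by gcongr
    _ = volumeRadius μ (A + B) := by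
        rw [← volumeRadius_smul μ (by positivity), smul_inv_smul₀ (by positivity)]

theorem volumeRadius_add_le_volumeRadius_add (hA : NullMeasurableSet A μ)
    (hB : NullMeasurableSet B μ) (hAn : A.Nonempty) (hBn : B.Nonempty) :
    volumeRadius μ A + volumeRadius μ B ≤ volumeRadius μ (A + B) := by
  have hA_le : volumeRadius μ A ≤ volumeRadius μ (A + B) :=
    volumeRadius_le_of_measure_le (add_comm B A ▸ measure_le_measure_add_of_nonempty μ hBn A)
  have hB_le : volumeRadius μ B ≤ volumeRadius μ (A + B) :=
    volumeRadius_le_of_measure_le (measure_le_measure_add_of_nonempty μ hAn B)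
  rcases eq_or_ne (volumeRadius μ A) 0 with hA0 | hA0
  · simpa only [hA0, zero_add] using hB_le
  rcases eq_or_ne (volumeRadius μ B) 0 with hB0 | hB0
  · simpa only [hB0, add_zero] using hA_le
  rcases eq_or_ne (volumeRadius μ A) ∞ with hA_top | hA_top
  · simpa only [hA_top, top_add] using hA_le
  rcases eq_or_ne (volumeRadius μ B) ∞ with hB_top | hB_top
  · simpa only [hB_top, add_top] using hB_le
  exact volumeRadius_add_le_of_ne_zero_of_ne_top μ hA hB hA0 hA_top hB0 hB_top

end BrunnMinkowski

section Slices

theorem measure_slice_ne_top_of_isCompact {E F : Type*} [TopologicalSpace E] [TopologicalSpace F]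
    [MeasurableSpace F] (μ : Measure F) [IsFiniteMeasureOnCompacts μ] {P : Set (E × F)}
    (hP : IsCompact P) (x : E) : μ {z | (x, z) ∈ P} ≠ ∞ :=
  measure_ne_top_of_subset (fun _ hz => mem_image_of_mem Prod.snd hz)
    (hP.image continuous_snd).measure_ne_top

variable {E F : Type*} [AddCommMonoid E] [Module ℝ E] {P : Set (E × F)}

theorem convex_slice [AddCommMonoid F] [Module ℝ F] (hP : Convex ℝ P) (x : E) :
    Convex ℝ (Prod.mk x ⁻¹' P) := fun _ hz _ hw _ _ hs ht hst => by
  simpa only [mem_preimage, Prod.smul_mk, Prod.mk_add_mk, Convex.combo_self hst] using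
    hP hz hw hs ht hst

theorem smul_slice_add_smul_slice_subset [AddCommMonoid F] [Module ℝ F] (hP : Convex ℝ P)
    (x y : E) {s t : ℝ} (hs : 0 ≤ s) (ht : 0 ≤ t) (hst : s + t = 1) :
    s • (Prod.mk x ⁻¹' P) + t • (Prod.mk y ⁻¹' P) ⊆ Prod.mk (s • x + t • y) ⁻¹' P := by
  rintro _ ⟨_, ⟨z, hz, rfl⟩, _, ⟨w, hw, rfl⟩, rfl⟩
  exact hP hz hw hs ht hst

variable [NormedAddCommGroup F] [NormedSpace ℝ F] [MeasurableSpace F] [BorelSpace F]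
  [FiniteDimensional ℝ F] [Nontrivial F] (μ : Measure F) [μ.IsAddHaarMeasure]

theorem ofReal_mul_volumeRadius_slice_add_le (hP : Convex ℝ P) {x y : E}
    (hx : x ∈ Prod.fst '' P) (hy : y ∈ Prod.fst '' P) {s t : ℝ} (hs : 0 ≤ s) (ht : 0 ≤ t)
    (hst : s + t = 1) :
    ENNReal.ofReal s * volumeRadius μ (Prod.mk x ⁻¹' P) +
        ENNReal.ofReal t * volumeRadius μ (Prod.mk y ⁻¹' P) ≤
      volumeRadius μ (Prod.mk (s • x + t • y) ⁻¹' P) := by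
  obtain ⟨⟨x, u⟩, hu, rfl⟩ := hx
  obtain ⟨⟨y, v⟩, hv, rfl⟩ := hy
  have slice_nullMeasurable (x : E) : NullMeasurableSet (Prod.mk x ⁻¹' P) μ :=
    (convex_slice hP x).nullMeasurableSet μ
  rw [← volumeRadius_smul μ hs, ← volumeRadius_smul μ ht]
  calc volumeRadius μ (s • (Prod.mk x ⁻¹' P)) + volumeRadius μ (t • (Prod.mk y ⁻¹' P))
      ≤ volumeRadius μ (s • (Prod.mk x ⁻¹' P) + t • (Prod.mk y ⁻¹' P)) :=
        volumeRadius_add_le_volumeRadius_add μ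
          (Measure.NullMeasurableSet.const_smul (slice_nullMeasurable x) s)
          (Measure.NullMeasurableSet.const_smul (slice_nullMeasurable y) t)
          ⟨s • u, smul_mem_smul_set hu⟩ ⟨t • v, smul_mem_smul_set hv⟩
    _ ≤ volumeRadius μ (Prod.mk (s • x + t • y) ⁻¹' P) :=
        volumeRadius_le_of_measure_le
          (measure_mono (smul_slice_add_smul_slice_subset hP x y hs ht hst))

theorem slice_volume_power_concave_general (hP : Convex ℝ P)
    (hfin : ∀ x, μ {z | (x, z) ∈ P} ≠ ∞) :
    ConcaveOn ℝ (Prod.fst '' P)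
      (fun x => (μ {z | (x, z) ∈ P}).toReal ^ (Module.finrank ℝ F : ℝ)⁻¹) := by
  have radius_ne_top (x : E) : volumeRadius μ (Prod.mk x ⁻¹' P) ≠ ∞ :=
    ENNReal.rpow_ne_top_of_nonneg (by positivity) (hfin x)
  refine ⟨hP.linear_image (LinearMap.fst ℝ E F), fun x hx y hy s t hs ht hst => ?_⟩
  have toReal_radius (x : E) : (volumeRadius μ (Prod.mk x ⁻¹' P)).toReal =
      (μ {z | (x, z) ∈ P}).toReal ^ (Module.finrank ℝ F : ℝ)⁻¹ := (ENNReal.toReal_rpow _ _).symm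
  simp only [← toReal_radius, smul_eq_mul]
  have toReal_le := ENNReal.toReal_mono (radius_ne_top _)
    (ofReal_mul_volumeRadius_slice_add_le μ hP hx hy hs ht hst)
  rwa [ENNReal.toReal_add (ENNReal.mul_ne_top ENNReal.ofReal_ne_top (radius_ne_top x))
    (ENNReal.mul_ne_top ENNReal.ofReal_ne_top (radius_ne_top y)), ENNReal.toReal_mul,
    ENNReal.toReal_mul, ENNReal.toReal_ofReal hs, ENNReal.toReal_ofReal ht] at toReal_le

end Slices

/-- **Brunn–Minkowski obstruction.** Let `d ≥ 2` and let `P ⊂ ℝ × ℝ^{d-1}` be a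
compact convex set with nonempty interior. If `ρ(x)` denotes the `(d-1)`-dimensional
Lebesgue measure of the slice `{z' : (x,z') ∈ P}`, then `ρ^{1/(d-1)}` is concave
on the projection interval `Prod.fst '' P`. -/
theorem slice_volume_power_concave (d : ℕ) (hd : 2 ≤ d)
    (P : Set (ℝ × (Fin (d - 1) → ℝ))) (hPc : IsCompact P) (hPv : Convex ℝ P)
    (hPi : (interior P).Nonempty) :
    ConcaveOn ℝ (Prod.fst '' P)
      (fun x : ℝ =>
        (volume {z' : Fin (d - 1) → ℝ | (x, z') ∈ P}).toReal
          ^ (((d : ℝ) - 1)⁻¹)) := by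
  have : Nonempty (Fin (d - 1)) := ⟨⟨0, by omega⟩⟩
  simpa [Nat.cast_sub (one_le_two.trans hd)] using
    slice_volume_power_concave_general volume hPv (measure_slice_ne_top_of_isCompact volume hPc)
end

section
/- Let u, v ∈ ℝ² be linearly independent and let A and B be multisets of n real numbers. Then the set of configurations f : Fin n → ℝ² such that the multiset {⟨f(i), u⟩ : i ∈ Fin n} equals A and the multiset {⟨f(i), v⟩ : i ∈ Fin n} equals B is finite. In particular, two projected datasets in linearly independent directions determine the support configuration of an n-point atomic measure in ℝ² up to at most finitely many possibilities. -/
open RealInnerProductSpace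

/-!
An enumeration by a finite index type of a prescribed multiset takes values in its finite support,
so there are finitely many. A point is determined by its inner products with a spanning family,
hence a configuration is determined by the enumerations, one for each direction, that it projects
to.
-/

theorem finite_setOf_map_univ_val_eq {ι β : Type*} [Fintype ι] (A : Multiset β) :
    {g : ι → β | Multiset.map g (Finset.univ : Finset ι).val = A}.Finite := by
  classical
  refine (Set.Finite.pi' fun _ : ι => A.toFinset.finite_toSet).subset ?_
  rintro g rfl i
  simp

theorem finite_setOf_forall_map_univ_val_eq {ι κ α : Type*} {β : κ → Type*} [Fintype ι] [Finite κ]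
    {p : ∀ k, α → β k} (hp : Function.Injective fun x k => p k x) (A : ∀ k, Multiset (β k)) :
    {f : ι → α |
      ∀ k, Multiset.map (fun i => p k (f i)) (Finset.univ : Finset ι).val = A k}.Finite := by
  have projections_injective : Function.Injective fun (f : ι → α) k i => p k (f i) :=
    fun _ _ h => funext fun i => hp <| funext fun k => congrFun (congrFun h k) i
  exact (Set.Finite.pi' fun k => finite_setOf_map_univ_val_eq (A k)).preimage
    projections_injective.injOn

section InnerProductSpace

variable {𝕜 E κ : Type*} [RCLike 𝕜] [NormedAddCommGroup E] [InnerProductSpace 𝕜 E] {w : κ → E}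

theorem injective_inner_of_span_eq_top (hw : Submodule.span 𝕜 (Set.range w) = ⊤) :
    Function.Injective fun (x : E) k => inner 𝕜 x (w k) := by
  intro x y hxy
  have functionals_eq : innerₛₗ 𝕜 x = innerₛₗ 𝕜 y := LinearMap.ext_on_range hw (congrFun hxy)
  exact ext_inner_right 𝕜 (LinearMap.congr_fun functionals_eq)

theorem two_projections_finite_ambiguity_general {ι : Type*} [Fintype ι] [Finite κ]
    (hw : Submodule.span 𝕜 (Set.range w) = ⊤) (A : κ → Multiset 𝕜) :
    {f : ι → E |
      ∀ k, Multiset.map (fun i => inner 𝕜 (f i) (w k)) (Finset.univ : Finset ι).val = A k}.Finite :=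
  finite_setOf_forall_map_univ_val_eq (injective_inner_of_span_eq_top hw) A

end InnerProductSpace

/-- **Finite ambiguity from two generic projections.** Let `u, v ∈ ℝ²` be
linearly independent and let `A`, `B` be multisets of reals. The set of
configurations `f : Fin n → ℝ²` whose projected multiset in direction `u` is
`A` and in direction `v` is `B` is finite. -/
theorem two_projections_finite_ambiguity (n : ℕ)
    (u v : EuclideanSpace ℝ (Fin 2)) (huv : LinearIndependent ℝ ![u, v])
    (A B : Multiset ℝ) :
    {f : Fin n → EuclideanSpace ℝ (Fin 2) |
        Multiset.map (fun i => ⟪f i, u⟫) (Finset.univ : Finset (Fin n)).val = A ∧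
        Multiset.map (fun i => ⟪f i, v⟫) (Finset.univ : Finset (Fin n)).val = B}.Finite := by
  have hspan := huv.span_eq_top_of_card_eq_finrank (by simp)
  simpa [Fin.forall_fin_two] using
    two_projections_finite_ambiguity_general (ι := Fin n) hspan ![A, B]
end
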